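/- Under hypothesis (H2) and Δ∈(0,+∞), the following hold: (i) for every ρ∈(0,+∞), the function q↦I_{P_out}(q,ρ) is twice continuously differentiable, concave, and nonincreasing on [0,ρ]; (ii) for every ρ∈(0,+∞), q↦I_{P_out}(q,ρ) is Lipschitz on [0,ρ] with Lipschitz constant C_1(a,b) := (4a²+1)b², where a := ‖φ/√Δ‖_∞ and b := ‖∂_xφ/√Δ‖_∞; (iii) for every q∈[0,+∞), ρ↦I_{P_out}(q,ρ) is Lipschitz on [q,+∞) with Lipschitz constant C_2(a,b,c) := b²(128a⁴+12a²+27)+c(16a³+4√(2/π)), where c := ‖∂_{xx}φ/√Δ‖_∞. -/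

import Mathlib

open MeasureTheory ProbabilityTheory Real

noncomputable section

namespace GLM

/-- Standard Gaussian measure on ℝ. -/
def stdG : Measure ℝ := gaussianReal 0 1

/-- The transition density P_out(y|x). -/
def Pout (Δ : ℝ) {kA : ℕ} (PA : Measure (Fin kA → ℝ)) (φ : ℝ → (Fin kA → ℝ) → ℝ)
    (y x : ℝ) : ℝ :=
  (Real.sqrt (2 * π * Δ))⁻¹ * ∫ a, Real.exp (-(y - φ x a) ^ 2 / (2 * Δ)) ∂PA

/-- Scalar channel mutual information I_{P_out}(q, ρ'). -/
def IPout (Δ : ℝ) {kA : ℕ} (PA : Measure (Fin kA → ℝ)) (φ : ℝ → (Fin kA → ℝ) → ℝ)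
    (q ρ' : ℝ) : ℝ :=
  (∫ v, ∫ a, ∫ z,
      Real.log (Pout Δ PA φ (φ (Real.sqrt ρ' * v) a + Real.sqrt Δ * z) (Real.sqrt ρ' * v))
      ∂stdG ∂PA ∂stdG)
  - ∫ v, ∫ w, ∫ a, ∫ z,
      Real.log (∫ w', Pout Δ PA φ
        (φ (Real.sqrt q * v + Real.sqrt (ρ' - q) * w) a + Real.sqrt Δ * z)
        (Real.sqrt q * v + Real.sqrt (ρ' - q) * w') ∂stdG) ∂stdG ∂PA ∂stdG ∂stdG

/-- Sup-norm of a function of (x, a). -/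
def supNorm {kA : ℕ} (f : ℝ → (Fin kA → ℝ) → ℝ) : ℝ :=
  sSup (Set.range fun p : ℝ × (Fin kA → ℝ) => |f p.1 p.2|)

/-!
With respect to the law `stdG` of the normalised noise, the channel has a likelihood
`y ↦ L y x`; for each `y` it is bounded, bounded away from `0`, and has bounded first two
derivatives in `x`. Hence `I(q, ρ)` is a difference of integrals over `y` of `E[ψ(M_q)]`, where
`ψ m = m log m` and `M_q = E[L y (√q V + √(ρ - q) W) | V]`.

As `q` grows, `M_q` runs through a martingale generated by the heat flow, so an increment of
`E[ψ(M_q)]` is an averaged Bregman divergence of `ψ` and its derivative is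
`E[ψ''(M_q) (M_q')² / 2]`, half of a Fisher information. The Fisher information is again of this
form, with the jointly convex function `(m, n) ↦ n² / (2 m)` in place of `ψ`, so the second
derivative is nonnegative: the averaged entropy is `C²`, convex and nondecreasing in `q`.

The first Lipschitz constant bounds the Fisher information through the score. For the second one,
the change of `I(q, ρ)` in `ρ` splits into such a Fisher part and two changes in which `L y` is
replaced by its average over a further heat flow. Gibbs' inequality and convexity reduce the latter
to the second derivative of the likelihood weighted by the logarithm of the density.
-/

section Heat

open Set Filter Topology

instance : IsProbabilityMeasure stdG := inferInstanceAs (IsProbabilityMeasure (gaussianReal 0 1))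

lemma integrable_comp_stdG {E : Type*} [NormedAddCommGroup E] {F : ℝ → E} {C : ℝ}
    (hF : StronglyMeasurable F) (hC : ∀ x, ‖F x‖ ≤ C) {g : ℝ → ℝ} (hg : Measurable g) :
    Integrable (fun w => F (g w)) stdG :=
  .of_bound (hF.comp_measurable hg).aestronglyMeasurable C (.of_forall fun _ => hC _)

variable {E : Type*} [NormedAddCommGroup E] [NormedSpace ℝ E]

/-- The heat semigroup: `heat t F x` is the expectation of `F (x + √t W)` for a standard
Gaussian `W`. Time is normalised by the variance, so that the generator is `½ d²/dx²`. -/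
def heat (t : ℝ) (F : ℝ → E) (x : ℝ) : E := ∫ w, F (x + √t * w) ∂stdG

lemma memLp_id_stdG (n : ℕ) : MemLp id n stdG := mod_cast memLp_id_gaussianReal (n : NNReal)

lemma integrable_abs_pow_stdG (n : ℕ) : Integrable (fun w : ℝ => |w| ^ n) stdG := by
  simpa using (memLp_id_stdG n).integrable_norm_pow'

lemma integrable_pow_stdG (n : ℕ) : Integrable (fun w : ℝ => w ^ n) stdG :=
  (integrable_abs_pow_stdG n).mono' (by fun_prop) (.of_forall fun w => by simp)

lemma integrable_abs_stdG : Integrable (fun w : ℝ => |w|) stdG := by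
  simpa using integrable_abs_pow_stdG 1

lemma integral_id_stdG : ∫ w, w ∂stdG = 0 := integral_id_gaussianReal

lemma integral_sq_stdG : ∫ w, w ^ 2 ∂stdG = 1 := by
  have h := variance_fun_id_gaussianReal (μ := 0) (v := 1)
  rw [variance_eq_integral (by fun_prop)] at h
  simpa [stdG, integral_id_gaussianReal] using h

lemma map_add_stdG {s t : ℝ} (hs : 0 ≤ s) (ht : 0 ≤ t) :
    (stdG.prod stdG).map (fun z : ℝ × ℝ => √s * z.1 + √t * z.2)
      = stdG.map (fun v => √(s + t) * v) := by
  have as_conv : (stdG.prod stdG).map (fun z : ℝ × ℝ => √s * z.1 + √t * z.2)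
      = (stdG.map (fun v => √s * v)) ∗ (stdG.map (fun v => √t * v)) := by
    rw [Measure.conv, Measure.map_prod_map _ _ (by fun_prop) (by fun_prop),
      Measure.map_map (by fun_prop) (by fun_prop)]
    rfl
  rw [as_conv]
  unfold stdG
  rw [gaussianReal_map_const_mul, gaussianReal_map_const_mul, gaussianReal_map_const_mul,
    gaussianReal_conv_gaussianReal]
  congr 1
  · ring
  · ext
    simp [sq_sqrt, hs, ht, add_nonneg hs ht]

/-- The fourth moment `m` is determined by `E (V + W)⁴ = 4 m`, whose left side is `2 m + 6`. -/
lemma integral_pow_four_stdG : ∫ w, w ^ 4 ∂stdG = 3 := by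
  have h := congrArg (fun m => ∫ x, x ^ 4 ∂m) (map_add_stdG zero_le_one zero_le_one)
  have sq_two : √(1 + 1 : ℝ) ^ 4 = 4 := by
    rw [show 4 = 2 * 2 from rfl, pow_mul, sq_sqrt (by norm_num)]; norm_num
  beta_reduce at h
  rw [integral_map (by fun_prop) (by fun_prop), integral_map (by fun_prop) (by fun_prop)] at h
  simp only [sqrt_one, one_mul, add_pow, mul_pow, sq_two, integral_const_mul] at h
  rw [integral_finsetSum _ fun m _ =>
    ((integrable_pow_stdG m).mul_prod (integrable_pow_stdG (4 - m))).mul_const _] at h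
  simp only [integral_mul_const, fun m n : ℕ =>
    integral_prod_mul (μ := stdG) (ν := stdG) (fun v : ℝ => v ^ m) fun w : ℝ => w ^ n] at h
  simp [Finset.sum_range_succ, integral_sq_stdG, integral_id_stdG, Nat.choose] at h
  linarith

lemma integral_abs_stdG_le : ∫ w, |w| ∂stdG ≤ 1 :=
  calc ∫ w, |w| ∂stdG ≤ ∫ w, (1 + w ^ 2) / 2 ∂stdG := by
        refine integral_mono integrable_abs_stdG
          (((integrable_const _).add (integrable_pow_stdG 2)).div_const 2) fun w => ?_
        linarith [two_mul_le_add_sq 1 |w|, sq_abs w]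
    _ = 1 := by
        rw [integral_div, integral_add (integrable_const _) (integrable_pow_stdG 2),
          integral_sq_stdG]
        simp

lemma integral_abs_pow_three_stdG_le : ∫ w, |w| ^ 3 ∂stdG ≤ 2 :=
  calc ∫ w, |w| ^ 3 ∂stdG ≤ ∫ w, (w ^ 2 + w ^ 4) / 2 ∂stdG := by
        refine integral_mono (integrable_abs_pow_stdG 3)
          (((integrable_pow_stdG 2).add (integrable_pow_stdG 4)).div_const 2) fun w => ?_
        have h4 : w ^ 4 = |w| ^ 4 := by rw [← abs_pow, abs_of_nonneg (by positivity)]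
        linarith [two_mul_le_add_sq |w| (|w| ^ 2), sq_abs w]
    _ = 2 := by
        rw [integral_div, integral_add (integrable_pow_stdG 2) (integrable_pow_stdG 4),
          integral_sq_stdG, integral_pow_four_stdG]
        norm_num

lemma integral_integral_add_stdG {s t C : ℝ} (hs : 0 ≤ s) (ht : 0 ≤ t) {F : ℝ → E}
    (hF : StronglyMeasurable F) (hC : ∀ x, ‖F x‖ ≤ C) :
    ∫ v, ∫ w, F (√s * v + √t * w) ∂stdG ∂stdG = ∫ v, F (√(s + t) * v) ∂stdG := by
  have h := congrArg (fun m => ∫ x, F x ∂m) (map_add_stdG hs ht)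
  rw [integral_map (by fun_prop) hF.aestronglyMeasurable,
    integral_map (by fun_prop) hF.aestronglyMeasurable, integral_prod] at h
  · exact h
  · exact .of_bound (hF.comp_measurable (by fun_prop)).aestronglyMeasurable C
      (.of_forall fun _ => hC _)

lemma integral_heat {s t C : ℝ} (hs : 0 ≤ s) (ht : 0 ≤ t) {F : ℝ → E}
    (hF : StronglyMeasurable F) (hC : ∀ x, ‖F x‖ ≤ C) :
    ∫ v, heat t F (√s * v) ∂stdG = ∫ v, F (√(s + t) * v) ∂stdG :=
  integral_integral_add_stdG hs ht hF hC

lemma heat_heat {s t C : ℝ} (hs : 0 ≤ s) (ht : 0 ≤ t) {F : ℝ → E}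
    (hF : StronglyMeasurable F) (hC : ∀ x, ‖F x‖ ≤ C) (x : ℝ) :
    heat s (heat t F) x = heat (s + t) F x := by
  have := integral_integral_add_stdG hs ht (F := fun z => F (x + z))
    (hF.comp_measurable (by fun_prop)) fun z => hC _
  simpa only [heat, add_assoc] using this

@[simp] lemma heat_zero (F : ℝ → E) [CompleteSpace E] (x : ℝ) : heat 0 F x = F x := by simp [heat]

lemma norm_heat_le {F : ℝ → E} {C : ℝ} (hC : ∀ x, ‖F x‖ ≤ C) (t x : ℝ) : ‖heat t F x‖ ≤ C := by
  simpa [heat] using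
    norm_integral_le_of_norm_le_const (μ := stdG) (.of_forall fun w => hC (x + √t * w))

lemma heat_mem [CompleteSpace E] {K : Set E} (hK : Convex ℝ K) (hK' : IsClosed K) {F : ℝ → E}
    {C : ℝ} (hF : StronglyMeasurable F) (hC : ∀ x, ‖F x‖ ≤ C) (h : ∀ x, F x ∈ K) (t x : ℝ) :
    heat t F x ∈ K :=
  hK.integral_mem hK' (.of_forall fun _ => h _) (integrable_comp_stdG hF hC (by fun_prop))

lemma heat_prodMk {E' : Type*} [NormedAddCommGroup E'] [NormedSpace ℝ E'] [CompleteSpace E]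
    [CompleteSpace E'] {F : ℝ → E} {G : ℝ → E'} {C C' : ℝ} (hF : StronglyMeasurable F)
    (hC : ∀ x, ‖F x‖ ≤ C) (hG : StronglyMeasurable G) (hC' : ∀ x, ‖G x‖ ≤ C') (t x : ℝ) :
    heat t (fun x => (F x, G x)) x = (heat t F x, heat t G x) :=
  integral_pair (integrable_comp_stdG hF hC (by fun_prop))
    (integrable_comp_stdG hG hC' (by fun_prop))

lemma stronglyMeasurable_uncurry_heat {Y : Type*} [MeasurableSpace Y] {p : Y → ℝ → E}
    (hp : StronglyMeasurable fun z : Y × ℝ => p z.1 z.2) (t : ℝ) :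
    StronglyMeasurable fun z : Y × ℝ => heat t (p z.1) z.2 :=
  (hp.comp_measurable (by fun_prop : Measurable fun z : (Y × ℝ) × ℝ =>
    (z.1.1, z.1.2 + √t * z.2))).integral_prod_right'

lemma stronglyMeasurable_heat {F : ℝ → E} (hF : StronglyMeasurable F) (t : ℝ) :
    StronglyMeasurable (heat t F) :=
  (stronglyMeasurable_uncurry_heat (p := fun _ : Unit => F) (hF.comp_measurable (by fun_prop))
    t).comp_measurable (by fun_prop : Measurable fun x : ℝ => ((), x))

lemma norm_sub_le_of_hasDerivAt {F F' : ℝ → E} {C : ℝ} (hd : ∀ x, HasDerivAt F (F' x) x)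
    (hC : ∀ x, ‖F' x‖ ≤ C) (x y : ℝ) : ‖F x - F y‖ ≤ C * |x - y| :=
  convex_univ.norm_image_sub_le_of_norm_hasDerivWithin_le (𝕜 := ℝ)
    (fun z _ => (hd z).hasDerivWithinAt) (fun z _ => hC z) (mem_univ y) (mem_univ x)

lemma stronglyMeasurable_of_hasDerivAt {F F' : ℝ → E} (hd : ∀ x, HasDerivAt F (F' x) x) :
    StronglyMeasurable F :=
  (continuous_iff_continuousAt.2 fun x => (hd x).continuousAt).stronglyMeasurable

lemma stronglyMeasurable_hasDerivAt [CompleteSpace E] {F F' : ℝ → E}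
    (hd : ∀ x, HasDerivAt F (F' x) x) : StronglyMeasurable F' := by
  rw [funext fun x => (hd x).deriv.symm]
  exact stronglyMeasurable_deriv F

lemma abs_sqrt_sub_sqrt_le {ε t : ℝ} (hε : 0 ≤ ε) (h : ε ≤ t) : |√(t - ε) - √t| ≤ √ε := by
  have hmono : √(t - ε) ≤ √t := sqrt_le_sqrt (by linarith)
  have hadd : √t ≤ √(t - ε) + √ε := by
    rw [sqrt_le_left (by positivity)]
    nlinarith [sq_sqrt (sub_nonneg.2 h), sq_sqrt hε,
      mul_nonneg (sqrt_nonneg ε) (sqrt_nonneg (t - ε))]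
  rw [abs_sub_comm, abs_of_nonneg (sub_nonneg.2 hmono)]
  linarith

lemma norm_heat_sub_heat_le {F F' : ℝ → E} {C₀ C ε t : ℝ} (hd : ∀ x, HasDerivAt F (F' x) x)
    (hb : ∀ x, ‖F x‖ ≤ C₀) (hC : ∀ x, ‖F' x‖ ≤ C) (hε : 0 ≤ ε) (h : ε ≤ t) (x w : ℝ) :
    ‖heat (t - ε) F (x + √ε * w) - heat t F x‖ ≤ C * √ε * (|w| + 1) := by
  have hF := stronglyMeasurable_of_hasDerivAt hd
  have hC0 : 0 ≤ C := (norm_nonneg _).trans (hC 0)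
  have pointwise (w' : ℝ) :
      ‖F (x + √ε * w + √(t - ε) * w') - F (x + √t * w')‖ ≤ C * √ε * (|w| + |w'|) :=
    calc _ ≤ C * |x + √ε * w + √(t - ε) * w' - (x + √t * w')| :=
          norm_sub_le_of_hasDerivAt hd hC _ _
      _ = C * |√ε * w + (√(t - ε) - √t) * w'| := by ring_nf
      _ ≤ C * (√ε * |w| + |√(t - ε) - √t| * |w'|) := by
          gcongr
          exact (abs_add_le _ _).trans_eq (by rw [abs_mul, abs_mul, abs_of_nonneg (by positivity)])
      _ ≤ C * (√ε * |w| + √ε * |w'|) := by gcongr; exact abs_sqrt_sub_sqrt_le hε h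
      _ = _ := by ring
  rw [heat, heat, ← integral_sub (integrable_comp_stdG hF hb (by fun_prop))
    (integrable_comp_stdG hF hb (by fun_prop))]
  calc _ ≤ ∫ w', C * √ε * (|w| + |w'|) ∂stdG :=
        norm_integral_le_of_norm_le
          (((integrable_const _).add integrable_abs_stdG).const_mul _) (.of_forall pointwise)
    _ = C * √ε * (|w| + ∫ w', |w'| ∂stdG) := by
        rw [integral_const_mul, integral_add (integrable_const _) integrable_abs_stdG]
        simp
    _ ≤ _ := by gcongr; exact integral_abs_stdG_le

lemma half_sqrt_le_sqrt_sub_sq {s t : ℝ} (ht : 0 ≤ t) (hs : |s| ≤ √t / 2) :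
    √t / 2 ≤ √(t - s ^ 2) := by
  have hs2 : s ^ 2 ≤ (√t / 2) ^ 2 := sq_le_sq' (abs_le.1 hs).1 (abs_le.1 hs).2
  exact le_sqrt_of_sq_le (by nlinarith [sq_sqrt ht])

lemma hasDerivAt_add_sqrt_sub_sq {s t : ℝ} (hs : 0 < √(t - s ^ 2)) (x w w' : ℝ) :
    HasDerivAt (fun s : ℝ => x + s * w + √(t - s ^ 2) * w') (w + -s / √(t - s ^ 2) * w') s := by
  refine ((((hasDerivAt_id s).mul_const w).const_add x).add
    ((((hasDerivAt_pow 2 s).const_sub t).sqrt (sqrt_pos.1 hs).ne').mul_const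
      w')).congr_deriv ?_
  field_simp
  ring

/-- Parametrising time by `s ^ 2` makes the space-time path differentiable at `s = 0`: the time
increment enters `√(t - s ^ 2)` only to second order. -/
lemma hasDerivAt_heat_sq [CompleteSpace E] {F F' : ℝ → E} {C₀ C t : ℝ}
    (hd : ∀ x, HasDerivAt F (F' x) x) (hb : ∀ x, ‖F x‖ ≤ C₀) (hC : ∀ x, ‖F' x‖ ≤ C) (ht : 0 < t)
    (x w : ℝ) : HasDerivAt (fun s => heat (t - s ^ 2) F (x + s * w)) (w • heat t F' x) 0 := by
  have hF := stronglyMeasurable_of_hasDerivAt hd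
  have hF' := stronglyMeasurable_hasDerivAt hd
  have hst : 0 < √t / 2 := half_pos (sqrt_pos.2 ht)
  have abs_le_sqrt {s : ℝ} (hs : s ∈ Metric.ball 0 (√t / 2)) :
      |s| ≤ √(t - s ^ 2) ∧ 0 < √(t - s ^ 2) := by
    have hs' : |s| ≤ √t / 2 := by simpa using (mem_ball_iff_norm.1 hs).le
    have := half_sqrt_le_sqrt_sub_sq ht.le hs'
    exact ⟨hs'.trans this, hst.trans_le this⟩
  have slope_le (w' : ℝ) {s : ℝ} (hs : s ∈ Metric.ball 0 (√t / 2)) :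
      |w + -s / √(t - s ^ 2) * w'| ≤ |w| + |w'| := by
    obtain ⟨hle, hpos⟩ := abs_le_sqrt hs
    have : |-s / √(t - s ^ 2)| ≤ 1 := by rwa [abs_div, abs_neg, abs_of_pos hpos, div_le_one hpos]
    calc _ ≤ |w| + |-s / √(t - s ^ 2)| * |w'| := (abs_add_le _ _).trans_eq (by rw [abs_mul])
      _ ≤ |w| + 1 * |w'| := by gcongr
      _ = _ := by ring
  have deriv_integral := (hasDerivAt_integral_of_dominated_loc_of_deriv_le (μ := stdG)
    (x₀ := (0 : ℝ)) (F := fun s w' => F (x + s * w + √(t - s ^ 2) * w'))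
    (F' := fun s w' => (w + -s / √(t - s ^ 2) * w') • F' (x + s * w + √(t - s ^ 2) * w'))
    (bound := fun w' => (|w| + |w'|) * C) (Metric.ball_mem_nhds 0 hst)
    (.of_forall fun s => (hF.comp_measurable (by fun_prop)).aestronglyMeasurable)
    (integrable_comp_stdG hF hb (by fun_prop))
    ((Measurable.stronglyMeasurable (by fun_prop)).smul
      (hF'.comp_measurable (by fun_prop))).aestronglyMeasurable
    (.of_forall fun w' s hs => by
      rw [norm_smul]
      exact mul_le_mul (slope_le w' hs) (hC _) (norm_nonneg _) (by positivity))
    (((integrable_const _).add integrable_abs_stdG).mul_const _)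
    (.of_forall fun w' s hs =>
      (hd _).scomp s (hasDerivAt_add_sqrt_sub_sq (abs_le_sqrt hs).2 x w w'))).2
  simpa [heat, integral_smul] using deriv_integral

end Heat

section CondMean

open Set Filter Topology TopologicalSpace
open scoped ENNReal

variable {E : Type*} [NormedAddCommGroup E] [NormedSpace ℝ E]

/-- The conditional mean of `F (√q V + √(ρ - q) W)` given `V = v`, for independent standard
Gaussian variables `V` and `W`. -/
def condMean (ρ q : ℝ) (F : ℝ → E) (v : ℝ) : E := heat (ρ - q) F (√q * v)

lemma norm_condMean_le {F : ℝ → E} {C : ℝ} (hC : ∀ x, ‖F x‖ ≤ C) (ρ q v : ℝ) :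
    ‖condMean ρ q F v‖ ≤ C := norm_heat_le hC _ _

lemma condMean_mem [CompleteSpace E] {K : Set E} (hK : Convex ℝ K) (hK' : IsClosed K) {F : ℝ → E}
    {C : ℝ} (hF : StronglyMeasurable F) (hC : ∀ x, ‖F x‖ ≤ C) (h : ∀ x, F x ∈ K) (ρ q v : ℝ) :
    condMean ρ q F v ∈ K := heat_mem hK hK' hF hC h _ _

lemma stronglyMeasurable_condMean {F : ℝ → E} (hF : StronglyMeasurable F) (ρ q : ℝ) :
    StronglyMeasurable (condMean ρ q F) :=
  (stronglyMeasurable_heat hF _).comp_measurable (by fun_prop)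

lemma continuous_condMean {F : ℝ → E} {C : ℝ} (hF : Continuous F) (hC : ∀ x, ‖F x‖ ≤ C)
    (ρ v : ℝ) : Continuous fun q => condMean ρ q F v :=
  continuous_of_dominated (bound := fun _ => C)
    (fun q => (hF.comp (by fun_prop)).aestronglyMeasurable) (fun q => .of_forall fun w => hC _)
    (integrable_const C) (.of_forall fun w => hF.comp (by fun_prop))

lemma eLpNorm_condMean_le {F : ℝ → E} (hF : StronglyMeasurable F) {ρ q : ℝ} (hq : q ∈ Icc 0 ρ) :
    eLpNorm (condMean ρ q F) 1 stdG ≤ eLpNorm F 1 (stdG.map fun v => √ρ * v) := by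
  have add_sub : stdG.map (fun v => √ρ * v)
      = (stdG.prod stdG).map fun z : ℝ × ℝ => √q * z.1 + √(ρ - q) * z.2 := by
    rw [map_add_stdG hq.1 (sub_nonneg.2 hq.2), add_sub_cancel]
  have hmeas : Measurable fun z : ℝ × ℝ => ‖F (√q * z.1 + √(ρ - q) * z.2)‖ₑ :=
    (hF.comp_measurable (by fun_prop)).enorm
  rw [eLpNorm_one_eq_lintegral_enorm, eLpNorm_one_eq_lintegral_enorm, add_sub,
    lintegral_map hF.enorm (by fun_prop), lintegral_prod _ hmeas.aemeasurable]
  exact lintegral_mono fun v => enorm_integral_le_lintegral_enorm _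

lemma eLpNorm_condMean_sub_le {F G : ℝ → E} {C C' : ℝ} (hF : StronglyMeasurable F)
    (hC : ∀ x, ‖F x‖ ≤ C) (hG : StronglyMeasurable G) (hC' : ∀ x, ‖G x‖ ≤ C') {ρ q : ℝ}
    (hq : q ∈ Icc 0 ρ) : eLpNorm (condMean ρ q F - condMean ρ q G) 1 stdG
      ≤ eLpNorm (F - G) 1 (stdG.map fun v => √ρ * v) := by
  have : condMean ρ q F - condMean ρ q G = condMean ρ q (F - G) := funext fun v =>
    (integral_sub (integrable_comp_stdG hF hC (by fun_prop))
      (integrable_comp_stdG hG hC' (by fun_prop))).symm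
  rw [this]
  exact eLpNorm_condMean_le (hF.sub hG) hq

lemma tendsto_eLpNorm_condMean_sub_of_continuous {F : ℝ → E} {C : ℝ} (hF : Continuous F)
    (hC : ∀ x, ‖F x‖ ≤ C) (ρ q₀ : ℝ) :
    Tendsto (fun q => eLpNorm (condMean ρ q F - condMean ρ q₀ F) 1 stdG) (𝓝 q₀) (𝓝 0) := by
  simp only [eLpNorm_one_eq_lintegral_enorm]
  have hm := stronglyMeasurable_condMean hF.stronglyMeasurable ρ
  have lim := tendsto_lintegral_filter_of_dominated_convergence (μ := stdG) (l := 𝓝 q₀)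
    (F := fun q v => ‖(condMean ρ q F - condMean ρ q₀ F) v‖ₑ) (f := 0)
    (fun _ => ENNReal.ofReal (C + C)) (.of_forall fun q => ((hm q).sub (hm q₀)).enorm)
    (.of_forall fun q => .of_forall fun v => by
      rw [← ofReal_norm]
      exact ENNReal.ofReal_le_ofReal (norm_sub_le_of_le (norm_condMean_le hC _ _ _)
        (norm_condMean_le hC _ _ _)))
    (by simp) (.of_forall fun v => by
      simpa using (((continuous_condMean hF hC ρ v).tendsto q₀).sub_const
        (condMean ρ q₀ F v)).enorm)
  simpa using lim

lemma tendsto_eLpNorm_condMean_sub {F : ℝ → E} {C : ℝ} (hF : StronglyMeasurable F)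
    (hC : ∀ x, ‖F x‖ ≤ C) {ρ q₀ : ℝ} (hq₀ : q₀ ∈ Icc 0 ρ) :
    Tendsto (fun q => eLpNorm (condMean ρ q F - condMean ρ q₀ F) 1 stdG)
      (𝓝[Icc 0 ρ] q₀) (𝓝 0) := by
  have : IsProbabilityMeasure (stdG.map fun v : ℝ => √ρ * v) :=
    Measure.isProbabilityMeasure_map (by fun_prop)
  have hm {G : ℝ → E} (hG : StronglyMeasurable G) (q : ℝ) :
      AEStronglyMeasurable (condMean ρ q G) stdG :=
    (stronglyMeasurable_condMean hG ρ q).aestronglyMeasurable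
  refine ENNReal.tendsto_nhds_zero.2 fun ε hε => ?_
  have hε3 : ε / 3 ≠ 0 := (ENNReal.div_pos hε.ne' (by simp)).ne'
  have hF1 : MemLp F 1 (stdG.map fun v : ℝ => √ρ * v) :=
    .of_bound hF.aestronglyMeasurable C (.of_forall hC)
  obtain ⟨g, hg, -⟩ := hF1.exists_boundedContinuous_eLpNorm_sub_le ENNReal.one_ne_top hε3
  have hgm := g.continuous.stronglyMeasurable
  have approx {q : ℝ} (hq : q ∈ Icc 0 ρ) :
      eLpNorm (condMean ρ q F - condMean ρ q g) 1 stdG ≤ ε / 3 :=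
    (eLpNorm_condMean_sub_le hF hC hgm g.norm_coe_le_norm hq).trans hg
  filter_upwards [self_mem_nhdsWithin, (ENNReal.tendsto_nhds_zero.1
    (tendsto_eLpNorm_condMean_sub_of_continuous g.continuous g.norm_coe_le_norm ρ q₀)
      (ε / 3) hε3.bot_lt).filter_mono nhdsWithin_le_nhds] with q hq hgq
  calc eLpNorm (condMean ρ q F - condMean ρ q₀ F) 1 stdG
      = eLpNorm ((condMean ρ q F - condMean ρ q g) + (condMean ρ q g - condMean ρ q₀ g)
          - (condMean ρ q₀ F - condMean ρ q₀ g)) 1 stdG := by congr 1; abel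
    _ ≤ eLpNorm (condMean ρ q F - condMean ρ q g) 1 stdG
        + eLpNorm (condMean ρ q g - condMean ρ q₀ g) 1 stdG
        + eLpNorm (condMean ρ q₀ F - condMean ρ q₀ g) 1 stdG := by
          refine (eLpNorm_sub_le ?_ ?_ le_rfl).trans
            (add_le_add (eLpNorm_add_le ?_ ?_ le_rfl) le_rfl)
          · exact ((hm hF q).sub (hm hgm q)).add ((hm hgm q).sub (hm hgm q₀))
          · exact (hm hF q₀).sub (hm hgm q₀)
          · exact (hm hF q).sub (hm hgm q)
          · exact (hm hgm q).sub (hm hgm q₀)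
    _ ≤ ε / 3 + ε / 3 + ε / 3 := add_le_add (add_le_add (approx hq) hgq) (approx hq₀)
    _ = ε := ENNReal.add_thirds ε

lemma stronglyMeasurable_comp_of_continuousOn {α S S' : Type*} [MeasurableSpace α]
    [TopologicalSpace S] [PseudoMetrizableSpace S] [TopologicalSpace S'] {K : Set S} {Ψ : S → S'}
    (hΨ : ContinuousOn Ψ K) {X : α → S}
    (hX : StronglyMeasurable X) (h : ∀ v, X v ∈ K) : StronglyMeasurable fun v => Ψ (X v) :=
  hΨ.domRestrict.comp_stronglyMeasurable (g := K.domRestrict Ψ) (f := fun v => ⟨X v, h v⟩)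
    ((Embedding.comp_stronglyMeasurable_iff .subtypeVal).1 hX)

/-- No continuity of `F` is needed: `q ↦ condMean ρ q F` is continuous in `L¹`, hence along
almost surely convergent subsequences. -/
lemma continuousOn_integral_comp_condMean [CompleteSpace E] {E' : Type*} [NormedAddCommGroup E']
    [NormedSpace ℝ E'] {K : Set E} (hK : Convex ℝ K) (hK' : IsClosed K) {Ψ : E → E'} {B : ℝ}
    (hΨ : ContinuousOn Ψ K) (hB : ∀ z ∈ K, ‖Ψ z‖ ≤ B) {F : ℝ → E} {C : ℝ}
    (hF : StronglyMeasurable F) (hC : ∀ x, ‖F x‖ ≤ C) (h : ∀ x, F x ∈ K) (ρ : ℝ) :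
    ContinuousOn (fun q => ∫ v, Ψ (condMean ρ q F v) ∂stdG) (Icc 0 ρ) := by
  intro q₀ hq₀
  have hm := stronglyMeasurable_condMean hF ρ
  have hmem := condMean_mem hK hK' hF hC h ρ
  refine tendsto_of_subseq_tendsto fun u hu => ?_
  obtain ⟨n, -, hn⟩ := (tendstoInMeasure_of_tendsto_eLpNorm one_ne_zero
    (fun k => (hm (u k)).aestronglyMeasurable) (hm q₀).aestronglyMeasurable
    ((tendsto_eLpNorm_condMean_sub hF hC hq₀).comp hu)).exists_seq_tendsto_ae
  refine ⟨n, tendsto_integral_of_dominated_convergence (fun _ => B)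
    (fun k => (stronglyMeasurable_comp_of_continuousOn hΨ (hm _) (hmem _)).aestronglyMeasurable)
    (integrable_const B) (fun k => .of_forall fun v => hB _ (hmem _ v)) ?_⟩
  filter_upwards [hn] with v hv
  exact (hΨ _ (hmem q₀ v)).tendsto.comp
    (tendsto_nhdsWithin_iff.2 ⟨hv, .of_forall fun k => hmem _ v⟩)

end CondMean

section Bregman

open Set Filter Topology Asymptotics

variable {E : Type*} [NormedAddCommGroup E] [NormedSpace ℝ E] {κ : E → ℝ}

/-- The Bregman divergence of `κ`: the remainder at `b` of its first order expansion at `a`. -/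
def bregman (κ : E → ℝ) (a b : E) : ℝ := κ b - κ a - fderiv ℝ κ a (b - a)

lemma integral_bregman [CompleteSpace E] {α : Type*} [MeasurableSpace α] {μ : Measure α}
    [IsProbabilityMeasure μ] {X : α → E} (hX : Integrable X μ)
    (hκX : Integrable (fun w => κ (X w)) μ) :
    ∫ w, bregman κ (∫ w, X w ∂μ) (X w) ∂μ = ∫ w, κ (X w) ∂μ - κ (∫ w, X w ∂μ) := by
  set m := ∫ w, X w ∂μ with hm
  have centred : Integrable (fun w => X w - m) μ := hX.sub (integrable_const m)
  have gap : Integrable (fun w => κ (X w) - κ m) μ := hκX.sub (integrable_const _)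
  unfold bregman
  rw [integral_sub gap (ContinuousLinearMap.integrable_comp _ centred),
    ContinuousLinearMap.integral_comp_comm _ centred, integral_sub hX (integrable_const m),
    integral_sub hκX (integrable_const _)]
  simp [← hm]

lemma stronglyMeasurable_bregman {α : Type*} [MeasurableSpace α] {X : α → E}
    (hX : StronglyMeasurable X) (hκX : StronglyMeasurable fun w => κ (X w)) (a : E) :
    StronglyMeasurable fun w => bregman κ a (X w) :=
  (hκX.sub stronglyMeasurable_const).sub
    ((fderiv ℝ κ a).continuous.comp_stronglyMeasurable (hX.sub stronglyMeasurable_const))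

/-- Half the Hessian quadratic form of `κ`. -/
def halfHess (κ : E → ℝ) (a v : E) : ℝ := fderiv ℝ (fderiv ℝ κ) a v v / 2

lemma continuous_halfHess (a : E) : Continuous (halfHess κ a) := by
  unfold halfHess
  fun_prop

lemma differentiableAt_of_contDiffAt_two {a : E} (h : ContDiffAt ℝ 2 κ a) :
    DifferentiableAt ℝ κ a ∧ DifferentiableAt ℝ (fderiv ℝ κ) a :=
  ⟨h.differentiableAt two_ne_zero,
    (h.fderiv_right (m := 1) (by norm_num)).differentiableAt one_ne_zero⟩

lemma hasFDerivAt_halfHess_sub {a : E} (h : ContDiffAt ℝ 2 κ a) (z : E) :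
    HasFDerivAt (fun z => halfHess κ a (z - a)) (fderiv ℝ (fderiv ℝ κ) a (z - a)) z := by
  have hz := (hasFDerivAt_id (𝕜 := ℝ) z).sub_const a
  have symm : IsSymmSndFDerivAt ℝ κ a := h.isSymmSndFDerivAt (by simp)
  refine ((((fderiv ℝ (fderiv ℝ κ) a).hasFDerivAt.comp z hz).clm_apply hz).mul_const
    (2⁻¹ : ℝ)).congr_fderiv ?_
  ext v
  have := symm.eq v (z - a)
  simp at this ⊢
  linarith

lemma isLittleO_bregman_sub_halfHess {a : E} (h : ContDiffAt ℝ 2 κ a) :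
    (fun z => bregman κ a z - halfHess κ a (z - a)) =o[𝓝 a] fun z => ‖z - a‖ ^ 2 := by
  obtain ⟨r, hr, hball⟩ := Metric.eventually_nhds_iff_ball.1 (h.eventually (by simp))
  have hderiv {z : E} (hz : z ∈ Metric.ball a r) :
      HasFDerivAt (fun z => bregman κ a z - halfHess κ a (z - a))
        (fderiv ℝ κ z - fderiv ℝ κ a - fderiv ℝ (fderiv ℝ κ) a (z - a)) z := by
    have hκ := (differentiableAt_of_contDiffAt_two (hball z hz)).1.hasFDerivAt
    have hlin := (fderiv ℝ κ a).hasFDerivAt.comp z ((hasFDerivAt_id (𝕜 := ℝ) z).sub_const a)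
    exact ((hκ.sub_const (κ a)).sub hlin).sub (hasFDerivAt_halfHess_sub h z)
  have hsmall := (differentiableAt_of_contDiffAt_two h).2.hasFDerivAt.isLittleO
  have := (convex_ball a r).isLittleO_pow_succ (n := 1) (Metric.mem_ball_self hr)
    (fun z hz => (hderiv hz).hasFDerivWithinAt)
    (by simpa using hsmall.norm_right.mono nhdsWithin_le_nhds)
  rw [nhdsWithin_eq_nhds.2 (Metric.ball_mem_nhds a hr)] at this
  simpa [bregman, halfHess] using this

lemma tendsto_bregman_div_sq {g : ℝ → E} {m : E} (h : ContDiffAt ℝ 2 κ (g 0))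
    (hg : HasDerivAt g m 0) :
    Tendsto (fun s => bregman κ (g 0) (g s) / s ^ 2) (𝓝[≠] 0) (𝓝 (halfHess κ (g 0) m)) := by
  have hslope : Tendsto (fun s : ℝ => s⁻¹ • (g s - g 0)) (𝓝[≠] 0) (𝓝 m) := by
    simpa using hg.tendsto_slope_zero
  have hg0 : Tendsto g (𝓝[≠] 0) (𝓝 (g 0)) := hg.continuousAt.tendsto.mono_left nhdsWithin_le_nhds
  have remainder : Tendsto (fun s => (bregman κ (g 0) (g s) - halfHess κ (g 0) (g s - g 0)) / s ^ 2)
      (𝓝[≠] 0) (𝓝 0) := by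
    refine (((isLittleO_bregman_sub_halfHess h).comp_tendsto hg0).trans_isBigO
      (IsBigO.pow ?_ 2)).tendsto_div_nhds_zero
    simpa using (hg.differentiableAt.isBigO_sub.mono nhdsWithin_le_nhds).norm_left
  have quadratic : Tendsto (fun s : ℝ => halfHess κ (g 0) (s⁻¹ • (g s - g 0))) (𝓝[≠] 0)
      (𝓝 (halfHess κ (g 0) m)) := ((continuous_halfHess (g 0)).tendsto m).comp hslope
  refine (by simpa using remainder.add quadratic : Tendsto _ _ _).congr' ?_
  filter_upwards [self_mem_nhdsWithin] with s (hs : s ≠ 0)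
  simp only [halfHess, map_smul, smul_apply, smul_eq_mul]
  field_simp
  ring

lemma continuousOn_fderiv_fderiv {K : Set E} (hκ : ∀ a ∈ K, ContDiffAt ℝ 2 κ a) :
    ContinuousOn (fderiv ℝ (fderiv ℝ κ)) K := fun a ha =>
  (((hκ a ha).fderiv_right (m := 1) (by norm_num)).fderiv_right
    (m := 0) (by norm_num)).continuousAt.continuousWithinAt

lemma exists_abs_bregman_le {K : Set E} (hκ : ∀ a ∈ K, ContDiffAt ℝ 2 κ a) (hK : IsCompact K)
    (hKc : Convex ℝ K) : ∃ C, 0 ≤ C ∧ ∀ a ∈ K, ∀ b ∈ K, |bregman κ a b| ≤ C * ‖b - a‖ ^ 2 := by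
  have hdiff {z : E} (hz : z ∈ K) := differentiableAt_of_contDiffAt_two (hκ z hz)
  obtain ⟨C, hC⟩ := hK.exists_bound_of_continuousOn (E := E →L[ℝ] E →L[ℝ] ℝ)
    (continuousOn_fderiv_fderiv hκ)
  refine ⟨|C|, abs_nonneg C, fun a ha b hb => ?_⟩
  have hseg : segment ℝ a b ⊆ K := hKc.segment_subset ha hb
  have gradient {z : E} (hz : z ∈ segment ℝ a b) :
      ‖fderiv ℝ κ z - fderiv ℝ κ a‖ ≤ |C| * ‖b - a‖ :=
    (hKc.norm_image_sub_le_of_norm_hasFDerivWithin_le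
      (fun w hw => (hdiff hw).2.hasFDerivAt.hasFDerivWithinAt)
      (fun w hw => (hC w hw).trans (le_abs_self C)) ha (hseg hz)).trans
      (mul_le_mul_of_nonneg_left (norm_sub_le_of_mem_segment hz) (abs_nonneg C))
  calc |bregman κ a b| ≤ |C| * ‖b - a‖ * ‖b - a‖ :=
        (convex_segment a b).norm_image_sub_le_of_norm_hasFDerivWithin_le'
          (fun z hz => (hdiff (hseg hz)).1.hasFDerivAt.hasFDerivWithinAt) (fun z hz => gradient hz)
          (left_mem_segment ℝ a b) (right_mem_segment ℝ a b)
    _ = |C| * ‖b - a‖ ^ 2 := by ring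

end Bregman

section Generator

open Set Filter Topology

variable {E : Type*} [NormedAddCommGroup E] [NormedSpace ℝ E] [CompleteSpace E] {κ : E → ℝ}
  {K : Set E} {F F' : ℝ → E}

lemma integrable_abs_add_one_sq_stdG : Integrable (fun w : ℝ => (|w| + 1) ^ 2) stdG :=
  (((integrable_abs_pow_stdG 2).add (integrable_abs_stdG.const_mul 2)).add
    (integrable_const 1)).congr (.of_forall fun w => by simp only [Pi.add_apply]; ring)

/-- Since `heat ε (heat (t - ε) F) = heat t F`, the first order term of `κ` averages out. -/
lemma integral_bregman_heat (hκ : ContinuousOn κ K) (hK : IsCompact K) (hKc : Convex ℝ K)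
    (hF : StronglyMeasurable F) (hFK : ∀ x, F x ∈ K) {ε t : ℝ} (hε : 0 ≤ ε) (h : ε ≤ t) (x : ℝ) :
    ∫ w, bregman κ (heat t F x) (heat (t - ε) F (x + √ε * w)) ∂stdG
      = heat ε (fun z => κ (heat (t - ε) F z)) x - κ (heat t F x) := by
  obtain ⟨C, hC⟩ := hK.exists_bound_of_continuousOn continuousOn_id
  obtain ⟨B, hB⟩ := hK.exists_bound_of_continuousOn hκ
  have hFC (x : ℝ) : ‖F x‖ ≤ C := hC _ (hFK x)
  have hmem := heat_mem hKc hK.isClosed hF hFC hFK (t - ε)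
  have hm := stronglyMeasurable_heat hF (t - ε)
  have mean : heat t F x = ∫ w, heat (t - ε) F (x + √ε * w) ∂stdG := by
    rw [← heat, heat_heat hε (sub_nonneg.2 h) hF hFC, add_sub_cancel]
  rw [mean]
  exact integral_bregman (integrable_comp_stdG hm (norm_heat_le hFC _) (by fun_prop))
    (integrable_comp_stdG (stronglyMeasurable_comp_of_continuousOn hκ hm hmem)
      (fun z => hB _ (hmem z)) (by fun_prop))

lemma exists_abs_bregman_heat_le (hκ : ∀ a ∈ K, ContDiffAt ℝ 2 κ a) (hK : IsCompact K)
    (hKc : Convex ℝ K) {C : ℝ} (hd : ∀ x, HasDerivAt F (F' x) x) (hC : ∀ x, ‖F' x‖ ≤ C)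
    (hFK : ∀ x, F x ∈ K) : ∃ B, ∀ ε t x w : ℝ, 0 ≤ ε → ε ≤ t →
      |bregman κ (heat t F x) (heat (t - ε) F (x + √ε * w))| ≤ B * ε * (|w| + 1) ^ 2 := by
  obtain ⟨C₀, hC₀⟩ := hK.exists_bound_of_continuousOn continuousOn_id
  obtain ⟨B, hB0, hB⟩ := exists_abs_bregman_le hκ hK hKc
  have hFC (x : ℝ) : ‖F x‖ ≤ C₀ := hC₀ _ (hFK x)
  have hmem := heat_mem hKc hK.isClosed (stronglyMeasurable_of_hasDerivAt hd) hFC hFK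
  refine ⟨B * C ^ 2, fun ε t x w hε h => (hB _ (hmem t x) _ (hmem _ _)).trans ?_⟩
  calc _ ≤ B * (C * √ε * (|w| + 1)) ^ 2 := by
        gcongr
        exact norm_heat_sub_heat_le hd hFC hC hε h x w
    _ = B * C ^ 2 * √ε ^ 2 * (|w| + 1) ^ 2 := by ring
    _ = _ := by rw [sq_sqrt hε]

lemma tendsto_sqrt_nhdsGT_zero : Tendsto (fun ε : ℝ => √ε) (𝓝[>] 0) (𝓝[≠] 0) := by
  refine tendsto_nhdsWithin_iff.2 ⟨?_, ?_⟩
  · simpa using (Real.continuous_sqrt.tendsto 0).mono_left nhdsWithin_le_nhds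
  · filter_upwards [self_mem_nhdsWithin] with ε hε using (sqrt_pos.2 hε).ne'

lemma tendsto_bregman_heat_div {C₀ C t : ℝ} (hd : ∀ x, HasDerivAt F (F' x) x)
    (hC₀ : ∀ x, ‖F x‖ ≤ C₀) (hC : ∀ x, ‖F' x‖ ≤ C) (ht : 0 < t) (x w : ℝ)
    (hκ : ContDiffAt ℝ 2 κ (heat t F x)) :
    Tendsto (fun ε => bregman κ (heat t F x) (heat (t - ε) F (x + √ε * w)) / ε) (𝓝[>] 0)
      (𝓝 (w ^ 2 * halfHess κ (heat t F x) (heat t F' x))) := by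
  have along_sqrt := (tendsto_bregman_div_sq (κ := κ) (by simpa using hκ)
    (hasDerivAt_heat_sq hd hC₀ hC ht x w)).comp tendsto_sqrt_nhdsGT_zero
  refine (along_sqrt.congr' ?_).trans_eq ?_
  · filter_upwards [self_mem_nhdsWithin] with ε hε
    simp [sq_sqrt (mem_Ioi.1 hε).le]
  · simp only [halfHess, map_smul, smul_apply, smul_eq_mul]
    ring_nf

lemma tendsto_heat_comp_heat_sub_div (hκ : ∀ a ∈ K, ContDiffAt ℝ 2 κ a) (hK : IsCompact K)
    (hKc : Convex ℝ K) {C t : ℝ} (hd : ∀ x, HasDerivAt F (F' x) x) (hC : ∀ x, ‖F' x‖ ≤ C)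
    (hFK : ∀ x, F x ∈ K) (ht : 0 < t) (x : ℝ) :
    Tendsto (fun ε => (heat ε (fun z => κ (heat (t - ε) F z)) x - κ (heat t F x)) / ε) (𝓝[>] 0)
      (𝓝 (halfHess κ (heat t F x) (heat t F' x))) := by
  obtain ⟨C₀, hC₀⟩ := hK.exists_bound_of_continuousOn continuousOn_id
  obtain ⟨B, hB⟩ := exists_abs_bregman_heat_le hκ hK hKc hd hC hFK
  have hFC (x : ℝ) : ‖F x‖ ≤ C₀ := hC₀ _ (hFK x)
  have hF := stronglyMeasurable_of_hasDerivAt hd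
  have hmem := heat_mem hKc hK.isClosed hF hFC hFK
  have hκK : ContinuousOn κ K := fun a ha => (hκ a ha).continuousAt.continuousWithinAt
  have small : ∀ᶠ ε : ℝ in 𝓝[>] 0, 0 < ε ∧ ε ≤ t := Ioc_mem_nhdsGT ht
  have measurable (ε : ℝ) : AEStronglyMeasurable
      (fun w => bregman κ (heat t F x) (heat (t - ε) F (x + √ε * w)) / ε) stdG := by
    have hm := (stronglyMeasurable_heat hF (t - ε)).comp_measurable
      (by fun_prop : Measurable fun w : ℝ => x + √ε * w)
    exact ((stronglyMeasurable_bregman hm (stronglyMeasurable_comp_of_continuousOn hκK hm fun w =>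
      hmem _ _) _).measurable.div_const ε).aestronglyMeasurable
  have lim := tendsto_integral_filter_of_dominated_convergence (μ := stdG)
    (fun w => B * (|w| + 1) ^ 2) (.of_forall measurable)
    (by
      filter_upwards [small] with ε hε
      refine .of_forall fun w => ?_
      rw [Real.norm_eq_abs, abs_div, abs_of_pos hε.1, div_le_iff₀ hε.1]
      exact (hB ε t x w hε.1.le hε.2).trans_eq (by ring))
    (integrable_abs_add_one_sq_stdG.const_mul B)
    (.of_forall fun w => tendsto_bregman_heat_div hd hFC hC ht x w (hκ _ (hmem t x)))
  rw [integral_mul_const, integral_sq_stdG, one_mul] at lim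
  refine lim.congr' ?_
  filter_upwards [small] with ε hε
  rw [integral_div, integral_bregman_heat hκK hK hKc hF hFK hε.1.le hε.2]

lemma exists_abs_heat_comp_heat_sub_le (hκ : ∀ a ∈ K, ContDiffAt ℝ 2 κ a) (hK : IsCompact K)
    (hKc : Convex ℝ K) {C : ℝ} (hd : ∀ x, HasDerivAt F (F' x) x) (hC : ∀ x, ‖F' x‖ ≤ C)
    (hFK : ∀ x, F x ∈ K) : ∃ B, ∀ ε t x : ℝ, 0 ≤ ε → ε ≤ t →
      |heat ε (fun z => κ (heat (t - ε) F z)) x - κ (heat t F x)| ≤ B * ε := by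
  obtain ⟨B, hB⟩ := exists_abs_bregman_heat_le hκ hK hKc hd hC hFK
  refine ⟨B * ∫ w, (|w| + 1) ^ 2 ∂stdG, fun ε t x hε h => ?_⟩
  rw [← integral_bregman_heat (fun a ha => (hκ a ha).continuousAt.continuousWithinAt) hK hKc
    (stronglyMeasurable_of_hasDerivAt hd) hFK hε h]
  have := norm_integral_le_of_norm_le (integrable_abs_add_one_sq_stdG.const_mul (B * ε))
    (.of_forall fun w => (Real.norm_eq_abs _).trans_le (hB ε t x w hε h))
  rw [integral_const_mul] at this
  exact this.trans_eq (by ring)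

lemma hasDerivWithinAt_Icc_of_right {f g : ℝ → ℝ} {a b : ℝ} (hf : ContinuousOn f (Icc a b))
    (hg : ContinuousOn g (Icc a b)) (hd : ∀ x ∈ Ioo a b, HasDerivWithinAt f (g x) (Ioi x) x)
    {x : ℝ} (hx : x ∈ Icc a b) : HasDerivWithinAt f (g x) (Icc a b) x := by
  have hab : a ≤ b := hx.1.trans hx.2
  set G : ℝ → ℝ := IccExtend hab ((Icc a b).domRestrict g)
  have hG : Continuous G := (continuousOn_iff_continuous_domRestrict.1 hg).Icc_extend'
  have hGg {z : ℝ} (hz : z ∈ Icc a b) : G z = g z := IccExtend_of_mem _ _ hz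
  have ftc : ∀ z ∈ Icc a b, f z = f a + ∫ s in a..z, G s := fun z hz => by
    have hsub : Icc a z ⊆ Icc a b := Icc_subset_Icc_right hz.2
    rw [intervalIntegral.integral_eq_sub_of_hasDeriv_right_of_le hz.1 (hf.mono hsub)
      (fun s hs => ?_) (hG.intervalIntegrable a z)]
    · ring
    · have hs' : s ∈ Ioo a b := ⟨hs.1, hs.2.trans_le hz.2⟩
      rw [hGg (Ioo_subset_Icc_self hs')]
      exact hd s hs'
  have hder : HasDerivAt (fun z => f a + ∫ s in a..z, G s) (G x) x :=
    (intervalIntegral.integral_hasDerivAt_right (hG.intervalIntegrable a x)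
      (hG.stronglyMeasurableAtFilter _ _) hG.continuousAt).const_add (f a)
  rw [hGg hx] at hder
  exact hder.hasDerivWithinAt.congr ftc (ftc x hx)

lemma hasDerivWithinAt_integral_comp_condMean_Ioi (hκ : ∀ a ∈ K, ContDiffAt ℝ 2 κ a)
    (hK : IsCompact K) (hKc : Convex ℝ K) {C : ℝ} (hd : ∀ x, HasDerivAt F (F' x) x)
    (hC : ∀ x, ‖F' x‖ ≤ C) (hFK : ∀ x, F x ∈ K) {ρ q : ℝ} (hq : q ∈ Ico 0 ρ) :
    HasDerivWithinAt (fun q => ∫ v, κ (condMean ρ q F v) ∂stdG)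
      (∫ v, halfHess κ (condMean ρ q F v) (condMean ρ q F' v) ∂stdG) (Ioi q) q := by
  obtain ⟨C₀, hC₀⟩ := hK.exists_bound_of_continuousOn continuousOn_id
  have hκK : ContinuousOn κ K := fun a ha => (hκ a ha).continuousAt.continuousWithinAt
  obtain ⟨B₀, hB₀⟩ := hK.exists_bound_of_continuousOn hκK
  obtain ⟨B, hB⟩ := exists_abs_heat_comp_heat_sub_le hκ hK hKc hd hC hFK
  have hFC (x : ℝ) : ‖F x‖ ≤ C₀ := hC₀ _ (hFK x)
  have hF := stronglyMeasurable_of_hasDerivAt hd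
  have hmem := heat_mem hKc hK.isClosed hF hFC hFK
  have hκF (t : ℝ) : StronglyMeasurable fun z => κ (heat t F z) :=
    stronglyMeasurable_comp_of_continuousOn hκK (stronglyMeasurable_heat hF t) (hmem t)
  have hκB (t z : ℝ) : ‖κ (heat t F z)‖ ≤ B₀ := hB₀ _ (hmem t z)
  have toRight : Tendsto (fun r => r - q) (𝓝[>] q) (𝓝[>] 0) := by
    simpa using tendsto_map (f := fun r => r - q) (x := 𝓝[>] q)
  have small : ∀ᶠ r : ℝ in 𝓝[>] q, 0 < r - q ∧ r - q ≤ ρ - q :=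
    toRight.eventually (Ioc_mem_nhdsGT (sub_pos.2 hq.2))
  rw [hasDerivWithinAt_iff_tendsto_slope' self_notMem_Ioi]
  have lim := tendsto_integral_filter_of_dominated_convergence (μ := stdG) (l := 𝓝[>] q)
    (F := fun r v => (heat (r - q) (fun z => κ (heat (ρ - q - (r - q)) F z)) (√q * v)
      - κ (heat (ρ - q) F (√q * v))) / (r - q))
    (fun _ => B) (.of_forall fun r => ?_) ?_ (integrable_const B) (.of_forall fun v =>
      (tendsto_heat_comp_heat_sub_div hκ hK hKc hd hC hFK (sub_pos.2 hq.2) (√q * v)).comp toRight)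
  · refine lim.congr' ?_
    filter_upwards [small] with r hr
    rw [integral_div, integral_sub, integral_heat hq.1 hr.1.le (hκF _) (hκB _)]
    · simp [slope_def_field, condMean]
    · exact integrable_comp_stdG (stronglyMeasurable_heat (hκF _) _) (norm_heat_le (hκB _) _)
        (by fun_prop)
    · exact integrable_comp_stdG (hκF _) (hκB _) (by fun_prop)
  · exact ((((stronglyMeasurable_heat (hκF _) _).sub (hκF _)).measurable.comp
      (measurable_const_mul _)).div_const _).aestronglyMeasurable
  · filter_upwards [small] with r hr
    refine .of_forall fun v => ?_
    rw [Real.norm_eq_abs, abs_div, abs_of_pos hr.1, div_le_iff₀ hr.1]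
    exact hB _ _ _ hr.1.le hr.2

lemma continuousOn_integral_halfHess_condMean (hκ : ∀ a ∈ K, ContDiffAt ℝ 2 κ a)
    (hK : IsCompact K) (hKc : Convex ℝ K) {C : ℝ} (hd : ∀ x, HasDerivAt F (F' x) x)
    (hC : ∀ x, ‖F' x‖ ≤ C) (hFK : ∀ x, F x ∈ K) (ρ : ℝ) : ContinuousOn
      (fun q => ∫ v, halfHess κ (condMean ρ q F v) (condMean ρ q F' v) ∂stdG) (Icc 0 ρ) := by
  obtain ⟨C₀, hC₀⟩ := hK.exists_bound_of_continuousOn continuousOn_id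
  obtain ⟨B, hB⟩ := hK.exists_bound_of_continuousOn (E := E →L[ℝ] E →L[ℝ] ℝ)
    (continuousOn_fderiv_fderiv hκ)
  have hFC (x : ℝ) : ‖F x‖ ≤ C₀ := hC₀ _ (hFK x)
  have hF := stronglyMeasurable_of_hasDerivAt hd
  have hF' := stronglyMeasurable_hasDerivAt hd
  have continuity : ContinuousOn (fun z : E × E => halfHess κ z.1 z.2)
      (K ×ˢ Metric.closedBall 0 C) :=
    ((((continuousOn_fderiv_fderiv hκ).comp continuousOn_fst fun z hz => hz.1).clm_apply
      continuousOn_snd).clm_apply continuousOn_snd).div_const 2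
  have bound : ∀ z ∈ K ×ˢ Metric.closedBall 0 C, ‖halfHess κ z.1 z.2‖ ≤ B * C * C / 2 := by
    rintro ⟨a, v⟩ ⟨ha, hv⟩
    have hv : ‖v‖ ≤ C := by simpa using hv
    rw [halfHess, norm_div, Real.norm_ofNat]
    gcongr
    exact ContinuousLinearMap.le_of_opNorm₂_le_of_le _ (hB a ha) hv hv
  have := continuousOn_integral_comp_condMean (F := fun x => (F x, F' x)) (C := max C₀ C)
    (hKc.prod (convex_closedBall 0 C)) (hK.isClosed.prod Metric.isClosed_closedBall) continuity
    bound (hF.prodMk hF') (fun x => max_le_max (hFC x) (hC x))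
    (fun x => ⟨hFK x, by simpa using hC x⟩) ρ
  simpa only [condMean, heat_prodMk hF hFC hF' hC] using this

theorem hasDerivWithinAt_integral_comp_condMean (hκ : ∀ a ∈ K, ContDiffAt ℝ 2 κ a)
    (hK : IsCompact K) (hKc : Convex ℝ K) {C : ℝ} (hd : ∀ x, HasDerivAt F (F' x) x)
    (hC : ∀ x, ‖F' x‖ ≤ C) (hFK : ∀ x, F x ∈ K) {ρ q : ℝ} (hq : q ∈ Icc 0 ρ) :
    HasDerivWithinAt (fun q => ∫ v, κ (condMean ρ q F v) ∂stdG)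
      (∫ v, halfHess κ (condMean ρ q F v) (condMean ρ q F' v) ∂stdG) (Icc 0 ρ) q := by
  obtain ⟨C₀, hC₀⟩ := hK.exists_bound_of_continuousOn continuousOn_id
  have hκK : ContinuousOn κ K := fun a ha => (hκ a ha).continuousAt.continuousWithinAt
  obtain ⟨B, hB⟩ := hK.exists_bound_of_continuousOn hκK
  exact hasDerivWithinAt_Icc_of_right
    (continuousOn_integral_comp_condMean hKc hK.isClosed hκK hB
      (stronglyMeasurable_of_hasDerivAt hd) (fun x => hC₀ _ (hFK x)) hFK ρ)
    (continuousOn_integral_halfHess_condMean hκ hK hKc hd hC hFK ρ)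
    (fun r hr => hasDerivWithinAt_integral_comp_condMean_Ioi hκ hK hKc hd hC hFK
      (Ioo_subset_Ico_self hr)) hq

end Generator

section ParametricIntegral

open Set Filter Topology

variable {Y : Type*} [MeasurableSpace Y] {μ : Measure Y}

lemma hasDerivWithinAt_integral_of_dominated {f f' : ℝ → Y → ℝ} {bound : Y → ℝ} {s : Set ℝ}
    (hs : Convex ℝ s) (hf : ∀ x ∈ s, Integrable (f x) μ) (hbound : Integrable bound μ)
    (hd : ∀ y, ∀ x ∈ s, HasDerivWithinAt (fun x => f x y) (f' x y) s x)
    (hb : ∀ y, ∀ x ∈ s, |f' x y| ≤ bound y) {x : ℝ} (hx : x ∈ s) :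
    HasDerivWithinAt (fun x => ∫ y, f x y ∂μ) (∫ y, f' x y ∂μ) s x := by
  rw [hasDerivWithinAt_iff_tendsto_slope]
  have lim := tendsto_integral_filter_of_dominated_convergence (μ := μ) (l := 𝓝[s \ {x}] x)
    (F := fun r y => slope (fun x => f x y) x r) bound ?_ ?_ hbound
    (.of_forall fun y => hasDerivWithinAt_iff_tendsto_slope.1 (hd y x hx))
  · refine lim.congr' ?_
    filter_upwards [self_mem_nhdsWithin] with r hr
    simp only [slope_def_field]
    rw [integral_div, integral_sub (hf r hr.1) (hf x hx)]
  · filter_upwards [self_mem_nhdsWithin] with r hr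
    simp only [slope_def_field]
    exact (((hf r hr.1).sub (hf x hx)).div_const _).aestronglyMeasurable
  · filter_upwards [self_mem_nhdsWithin] with r hr
    refine .of_forall fun y => ?_
    rw [slope_def_field, norm_div,
      div_le_iff₀ (norm_pos_iff.2 (sub_ne_zero.2 fun h => hr.2 h))]
    exact hs.norm_image_sub_le_of_norm_hasDerivWithin_le (hd y) (hb y) hx hr.1

lemma contDiffOn_two_Icc {f g k : ℝ → ℝ} {a b : ℝ} (hab : a < b)
    (hf : ∀ x ∈ Icc a b, HasDerivWithinAt f (g x) (Icc a b) x)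
    (hg : ∀ x ∈ Icc a b, HasDerivWithinAt g (k x) (Icc a b) x) (hk : ContinuousOn k (Icc a b)) :
    ContDiffOn ℝ 2 f (Icc a b) := by
  have hu := uniqueDiffOn_Icc hab
  have hg1 : ContDiffOn ℝ (0 + 1) g (Icc a b) :=
    (contDiffOn_succ_iff_derivWithin hu).2 ⟨fun x hx => (hg x hx).differentiableWithinAt, by simp,
      contDiffOn_zero.2 (hk.congr fun x hx => (hg x hx).derivWithin (hu x hx))⟩
  have hf2 : ContDiffOn ℝ (1 + 1) f (Icc a b) :=
    (contDiffOn_succ_iff_derivWithin hu).2 ⟨fun x hx => (hf x hx).differentiableWithinAt, by simp,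
      (hg1.congr fun x hx => (hf x hx).derivWithin (hu x hx)).of_le (by simp)⟩
  exact hf2.of_le one_add_one_eq_two.symm.le

end ParametricIntegral

section JetEnergy

open Set Filter Topology

/-- The second order jets `(m, n, k)` of functions that are at most `D` together with their first
two derivatives and at least `D⁻¹`. -/
def jetBox (D : ℝ) : Set (ℝ × ℝ × ℝ) := Icc D⁻¹ D ×ˢ Icc (-D) D ×ˢ Icc (-D) D

lemma convex_jetBox (D : ℝ) : Convex ℝ (jetBox D) :=
  (convex_Icc _ _).prod ((convex_Icc _ _).prod (convex_Icc _ _))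

lemma isCompact_jetBox (D : ℝ) : IsCompact (jetBox D) :=
  isCompact_Icc.prod (isCompact_Icc.prod isCompact_Icc)

lemma norm_le_of_mem_jetBox {D : ℝ} {z : ℝ × ℝ × ℝ} (hz : z ∈ jetBox D) : ‖z‖ ≤ D := by
  obtain ⟨⟨hm, hm'⟩, hn, hk⟩ := hz
  have hD : 0 ≤ D := by linarith [hn.1, hn.2]
  refine max_le (abs_le.2 ⟨?_, hm'⟩) (max_le (abs_le.2 hn) (abs_le.2 hk))
  linarith [inv_nonneg.2 hD]

/-- `J` collects a function and its first two derivatives, with values in `jetBox D`. -/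
structure IsBoundedJet (J : ℝ → ℝ × ℝ × ℝ) (D : ℝ) : Prop where
  one_le : 1 ≤ D
  hasDerivAt_fst : ∀ x, HasDerivAt (fun x => (J x).1) (J x).2.1 x
  hasDerivAt_snd : ∀ x, HasDerivAt (fun x => (J x).2.1) (J x).2.2 x
  mem : ∀ x, J x ∈ jetBox D

/-- The density `m log m` of the negative entropy. -/
def entropyDensity (z : ℝ × ℝ × ℝ) : ℝ := z.1 * log z.1

/-- The density `n² / (2 m)` of half the Fisher information. -/
def fisherDensity (z : ℝ × ℝ × ℝ) : ℝ := z.2.1 ^ 2 / (2 * z.1)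

/-- The density `m ((log m)'')² / 2` of the dissipation of half the Fisher information. -/
def curvatureDensity (z : ℝ × ℝ × ℝ) : ℝ := (z.2.2 - z.2.1 ^ 2 / z.1) ^ 2 / (2 * z.1)

/-- Applied along every line through `a`, this reduces a Hessian to one-variable derivatives. -/
lemma halfHess_eq_of_hasDerivAt {E : Type*} [NormedAddCommGroup E] [NormedSpace ℝ E] {κ : E → ℝ}
    {a v : E} (hκ : ContDiffAt ℝ 2 κ a) {g : ℝ → ℝ} {c : ℝ}
    (hg : ∀ᶠ s in 𝓝 (0 : ℝ), HasDerivAt (fun s : ℝ => κ (a + s • v)) (g s) s)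
    (hc : HasDerivAt g c 0) : halfHess κ a v = c / 2 := by
  have line (s : ℝ) : HasDerivAt (fun s : ℝ => a + s • v) v s := by
    simpa using ((hasDerivAt_id s).smul_const v).const_add a
  have line_zero : Tendsto (fun s : ℝ => a + s • v) (𝓝 0) (𝓝 a) := by
    simpa using (line 0).continuousAt.tendsto
  have gradient : g =ᶠ[𝓝 0] fun s => fderiv ℝ κ (a + s • v) v := by
    filter_upwards [hg, line_zero.eventually (hκ.eventually (by simp))] with s hs hκs
    exact hs.unique ((differentiableAt_of_contDiffAt_two hκs).1.hasFDerivAt.comp_hasDerivAt s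
      (line s))
  have hessian : HasDerivAt (fun s : ℝ => fderiv ℝ κ (a + s • v)) (fderiv ℝ (fderiv ℝ κ) a v) 0 :=
    HasFDerivAt.comp_hasDerivAt (f := fun s : ℝ => a + s • v) 0
      (by simpa using (differentiableAt_of_contDiffAt_two hκ).2.hasFDerivAt) (line 0)
  have := hc.unique (((hessian.clm_apply (hasDerivAt_const 0 v))).congr_of_eventuallyEq gradient)
  rw [this, halfHess]
  simp

lemma contDiffAt_mul_log {m : ℝ} (hm : 0 < m) : ContDiffAt ℝ 2 (fun m => m * log m) m :=
  contDiffAt_id.mul (contDiffAt_log.2 hm.ne')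

lemma eventually_pos_add_smul {m : ℝ} (hm : 0 < m) (m' : ℝ) :
    ∀ᶠ s in 𝓝 (0 : ℝ), 0 < m + s * m' :=
  (by fun_prop : ContinuousAt (fun s : ℝ => m + s * m') 0).eventually
    (lt_mem_nhds (by simpa using hm))

lemma halfHess_mul_log {m : ℝ} (hm : 0 < m) (n : ℝ) :
    halfHess (fun m => m * log m) m n = n ^ 2 / (2 * m) := by
  have line (s : ℝ) : HasDerivAt (fun s => m + s * n) n s := by
    simpa using ((hasDerivAt_id s).mul_const n).const_add m
  rw [halfHess_eq_of_hasDerivAt (contDiffAt_mul_log hm) (g := fun s => (log (m + s * n) + 1) * n)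
    (c := n / m * n)]
  · field_simp
  · filter_upwards [eventually_pos_add_smul hm n] with s hs
    exact (hasDerivAt_mul_log hs.ne').comp s (line s)
  · simpa using (((line 0).log (by simpa using hm.ne')).add_const 1).mul_const n

lemma contDiffAt_sq_div {z : ℝ × ℝ} (hz : 0 < z.1) :
    ContDiffAt ℝ 2 (fun z : ℝ × ℝ => z.2 ^ 2 / (2 * z.1)) z :=
  (contDiffAt_snd.pow 2).div (contDiffAt_const.mul contDiffAt_fst) (by positivity)

lemma halfHess_sq_div {z : ℝ × ℝ} (hz : 0 < z.1) (v : ℝ × ℝ) :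
    halfHess (fun z : ℝ × ℝ => z.2 ^ 2 / (2 * z.1)) z v
      = (v.2 - z.2 * v.1 / z.1) ^ 2 / (2 * z.1) := by
  obtain ⟨m, n⟩ := z
  obtain ⟨m', n'⟩ := v
  have hz : 0 < m := hz
  have line (a b s : ℝ) : HasDerivAt (fun s => a + s * b) b s := by
    simpa using ((hasDerivAt_id s).mul_const b).const_add a
  rw [halfHess_eq_of_hasDerivAt (contDiffAt_sq_div hz) (c := (n' - n * m' / m) ^ 2 / m)
    (g := fun s => (n + s * n') / (m + s * m') * n'
      - ((n + s * n') / (m + s * m')) ^ 2 * m' / 2)]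
  · field_simp
  · filter_upwards [eventually_pos_add_smul hz m'] with s hs
    refine (((line n n' s).pow 2).div ((line m m' s).const_mul 2) (by positivity)).congr_deriv ?_
    simp only [Pi.pow_apply]
    field_simp
    ring
  · have ratio := (line n n' 0).div (line m m' 0) (by simpa using hz.ne')
    refine ((ratio.mul_const n').sub (((ratio.pow 2).mul_const m').div_const 2)).congr_deriv ?_
    simp
    field_simp

namespace IsBoundedJet

variable {J : ℝ → ℝ × ℝ × ℝ} {D ρ q : ℝ}

lemma pos (h : IsBoundedJet J D) : 0 < D := one_pos.trans_le h.one_le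

lemma norm_le (h : IsBoundedJet J D) (x : ℝ) : ‖J x‖ ≤ D := norm_le_of_mem_jetBox (h.mem x)

lemma stronglyMeasurable (h : IsBoundedJet J D) : StronglyMeasurable J :=
  (stronglyMeasurable_of_hasDerivAt h.hasDerivAt_fst).prodMk
    ((stronglyMeasurable_of_hasDerivAt h.hasDerivAt_snd).prodMk
      (stronglyMeasurable_hasDerivAt h.hasDerivAt_snd))

lemma integrable (h : IsBoundedJet J D) {g : ℝ → ℝ} (hg : Measurable g) :
    Integrable (fun w => J (g w)) stdG := integrable_comp_stdG h.stronglyMeasurable h.norm_le hg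

lemma heat_mem (h : IsBoundedJet J D) (t x : ℝ) : heat t J x ∈ jetBox D :=
  GLM.heat_mem (convex_jetBox D) (isCompact_jetBox D).isClosed h.stronglyMeasurable h.norm_le
    h.mem t x

lemma heat_fst (h : IsBoundedJet J D) (t x : ℝ) :
    heat t (fun x => (J x).1) x = (heat t J x).1 :=
  (fst_integral (h.integrable (by fun_prop))).symm

lemma heat_snd (h : IsBoundedJet J D) (t x : ℝ) :
    heat t (fun x => (J x).2) x = (heat t J x).2 :=
  (snd_integral (h.integrable (by fun_prop))).symm

lemma heat_snd_fst (h : IsBoundedJet J D) (t x : ℝ) :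
    heat t (fun x => (J x).2.1) x = (heat t J x).2.1 :=
  (fst_integral (h.integrable (by fun_prop)).snd).symm.trans
    (congrArg Prod.fst (h.heat_snd t x))

lemma heat_fst_pos (h : IsBoundedJet J D) (t x : ℝ) : 0 < (heat t J x).1 :=
  (inv_pos.2 h.pos).trans_le (h.heat_mem t x).1.1

lemma hasDerivWithinAt_integral_entropyDensity (h : IsBoundedJet J D) (hq : q ∈ Icc 0 ρ) :
    HasDerivWithinAt (fun q => ∫ v, entropyDensity (condMean ρ q J v) ∂stdG)
      (∫ v, fisherDensity (condMean ρ q J v) ∂stdG) (Icc 0 ρ) q := by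
  have pos {m : ℝ} (hm : m ∈ Icc D⁻¹ D) : 0 < m := (inv_pos.2 h.pos).trans_le hm.1
  have generator := hasDerivWithinAt_integral_comp_condMean
    (fun m hm => contDiffAt_mul_log (pos hm)) isCompact_Icc (convex_Icc D⁻¹ D)
    h.hasDerivAt_fst (fun x => abs_le.2 (h.mem x).2.1)
    (fun x => (h.mem x).1) hq
  simp only [condMean, h.heat_fst, h.heat_snd_fst] at generator
  refine generator.congr_deriv (integral_congr_ae (.of_forall fun v => ?_))
  exact halfHess_mul_log (h.heat_fst_pos _ _) _

lemma hasDerivWithinAt_integral_fisherDensity (h : IsBoundedJet J D) (hq : q ∈ Icc 0 ρ) :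
    HasDerivWithinAt (fun q => ∫ v, fisherDensity (condMean ρ q J v) ∂stdG)
      (∫ v, curvatureDensity (condMean ρ q J v) ∂stdG) (Icc 0 ρ) q := by
  have pos {z : ℝ × ℝ} (hz : z ∈ Icc D⁻¹ D ×ˢ Icc (-D) D) : 0 < z.1 :=
    (inv_pos.2 h.pos).trans_le hz.1.1
  have generator := hasDerivWithinAt_integral_comp_condMean (fun z hz => contDiffAt_sq_div (pos hz))
    (isCompact_Icc.prod isCompact_Icc) ((convex_Icc D⁻¹ D).prod (convex_Icc (-D) D))
    (fun x => (h.hasDerivAt_fst x).prodMk (h.hasDerivAt_snd x))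
    (fun x => (norm_snd_le (J x)).trans (h.norm_le x))
    (fun x => ⟨(h.mem x).1, (h.mem x).2.1⟩) hq
  have heat_pair (t x : ℝ) : heat t (fun x => ((J x).1, (J x).2.1)) x
      = ((heat t J x).1, (heat t J x).2.1) := by
    rw [← h.heat_fst, ← h.heat_snd_fst]
    exact integral_pair (h.integrable (by fun_prop)).fst (h.integrable (by fun_prop)).snd.fst
  simp only [condMean, h.heat_snd, heat_pair] at generator
  refine generator.congr_deriv (integral_congr_ae (.of_forall fun v => ?_))
  refine (halfHess_sq_div (h.heat_fst_pos _ _) _).trans ?_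
  simp only [curvatureDensity, condMean, sq]

end IsBoundedJet
end JetEnergy

section JetFamily

open Set

/-- `Ψ` is measurable and bounded on each `jetBox D` by a polynomial in `D`. -/
structure HasPolynomialGrowth (Ψ : ℝ × ℝ × ℝ → ℝ) : Prop where
  measurable : Measurable Ψ
  exists_le : ∃ (c : ℝ) (k : ℕ), ∀ D, 1 ≤ D → ∀ z ∈ jetBox D, |Ψ z| ≤ c * D ^ k

lemma inv_fst_le_of_mem_jetBox {D : ℝ} {z : ℝ × ℝ × ℝ} (hD : 0 < D) (hz : z ∈ jetBox D) :
    z.1⁻¹ ≤ D := inv_le_of_inv_le₀ hD hz.1.1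

lemma fst_pos_of_mem_jetBox {D : ℝ} {z : ℝ × ℝ × ℝ} (hD : 0 < D) (hz : z ∈ jetBox D) :
    0 < z.1 := (inv_pos.2 hD).trans_le hz.1.1

lemma sq_le_sq_of_mem_jetBox {D : ℝ} {z : ℝ × ℝ × ℝ} (hz : z ∈ jetBox D) : z.2.1 ^ 2 ≤ D ^ 2 :=
  sq_le_sq' hz.2.1.1 hz.2.1.2

lemma hasPolynomialGrowth_entropyDensity : HasPolynomialGrowth entropyDensity where
  measurable := by unfold entropyDensity; fun_prop
  exists_le := by
    refine ⟨1, 2, fun D hD z hz => ?_⟩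
    have hD₀ : 0 < D := one_pos.trans_le hD
    have hm := fst_pos_of_mem_jetBox hD₀ hz
    have log_le : |log z.1| ≤ D := abs_le.2
      ⟨by linarith [one_sub_inv_le_log_of_pos hm, inv_fst_le_of_mem_jetBox hD₀ hz],
        by linarith [log_le_sub_one_of_pos hm, hz.1.2]⟩
    rw [entropyDensity, abs_mul, abs_of_pos hm, one_mul, sq]
    exact mul_le_mul hz.1.2 log_le (abs_nonneg _) hD₀.le

lemma hasPolynomialGrowth_fisherDensity : HasPolynomialGrowth fisherDensity where
  measurable := by unfold fisherDensity; fun_prop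
  exists_le := by
    refine ⟨1 / 2, 3, fun D hD z hz => ?_⟩
    have hD₀ : 0 < D := one_pos.trans_le hD
    have hm := fst_pos_of_mem_jetBox hD₀ hz
    rw [fisherDensity, abs_of_nonneg (by positivity)]
    calc z.2.1 ^ 2 / (2 * z.1) = 1 / 2 * (z.2.1 ^ 2 * z.1⁻¹) := by field_simp
      _ ≤ 1 / 2 * (D ^ 2 * D) := by
        have := mul_le_mul (sq_le_sq_of_mem_jetBox hz) (inv_fst_le_of_mem_jetBox hD₀ hz)
          (by positivity) (by positivity)
        linarith
      _ = 1 / 2 * D ^ 3 := by ring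

lemma hasPolynomialGrowth_curvatureDensity : HasPolynomialGrowth curvatureDensity where
  measurable := by unfold curvatureDensity; fun_prop
  exists_le := by
    refine ⟨2, 7, fun D hD z hz => ?_⟩
    have hD₀ : 0 < D := one_pos.trans_le hD
    have hm := fst_pos_of_mem_jetBox hD₀ hz
    have inv_le := inv_fst_le_of_mem_jetBox hD₀ hz
    have ratio_le : z.2.1 ^ 2 / z.1 ≤ D ^ 3 := by
      rw [div_eq_mul_inv, pow_succ D 2]
      exact mul_le_mul (sq_le_sq_of_mem_jetBox hz) inv_le (by positivity) (by positivity)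
    have le_cube : D ≤ D ^ 3 := le_self_pow₀ hD (by norm_num)
    have ratio_nonneg : 0 ≤ z.2.1 ^ 2 / z.1 := by positivity
    have numerator_le : (z.2.2 - z.2.1 ^ 2 / z.1) ^ 2 ≤ (2 * D ^ 3) ^ 2 :=
      sq_le_sq' (by linarith [hz.2.2.1]) (by linarith [hz.2.2.2])
    rw [curvatureDensity, abs_of_nonneg (by positivity)]
    calc (z.2.2 - z.2.1 ^ 2 / z.1) ^ 2 / (2 * z.1)
        = (z.2.2 - z.2.1 ^ 2 / z.1) ^ 2 * z.1⁻¹ / 2 := by field_simp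
      _ ≤ (2 * D ^ 3) ^ 2 * D / 2 := by gcongr
      _ = 2 * D ^ 7 := by ring

lemma curvatureDensity_nonneg {z : ℝ × ℝ × ℝ} (hz : 0 ≤ z.1) : 0 ≤ curvatureDensity z := by
  unfold curvatureDensity; positivity

lemma fisherDensity_nonneg {z : ℝ × ℝ × ℝ} (hz : 0 ≤ z.1) : 0 ≤ fisherDensity z := by
  unfold fisherDensity; positivity

lemma continuousOn_curvatureDensity {D : ℝ} (hD : 0 < D) :
    ContinuousOn curvatureDensity (jetBox D) := by
  have ne (z) (hz : z ∈ jetBox D) : z.1 ≠ 0 := (fst_pos_of_mem_jetBox hD hz).ne'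
  unfold curvatureDensity
  exact ((by fun_prop : ContinuousOn (fun z : ℝ × ℝ × ℝ => z.2.2) _).sub
    (ContinuousOn.div (by fun_prop) (by fun_prop) ne)).pow 2 |>.div (by fun_prop)
      fun z hz => mul_ne_zero two_ne_zero (ne z hz)

/-- A measurable family of jets, bounded by a weight `D` whose powers are `μ`-integrable. -/
structure IsJetFamily {Y : Type*} [MeasurableSpace Y] (μ : Measure Y) (J : Y → ℝ → ℝ × ℝ × ℝ)
    (D : Y → ℝ) : Prop where
  measurable_weight : Measurable D
  integrable_pow : ∀ n : ℕ, Integrable (fun y => D y ^ n) μ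
  measurable : Measurable fun z : Y × ℝ => J z.1 z.2
  isBoundedJet : ∀ y, IsBoundedJet (J y) (D y)

variable {Y : Type*} [MeasurableSpace Y] {μ : Measure Y} {J : Y → ℝ → ℝ × ℝ × ℝ} {D : Y → ℝ}
  {Ψ : ℝ × ℝ × ℝ → ℝ} {ρ q : ℝ}

/-- The integral over `y` of the density `Ψ` along the heat flow of the jets `J y`, averaged over
a centred Gaussian starting point of variance `q`. -/
def energy (μ : Measure Y) (J : Y → ℝ → ℝ × ℝ × ℝ) (Ψ : ℝ × ℝ × ℝ → ℝ) (q t : ℝ) : ℝ :=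
  ∫ v, ∫ y, Ψ (heat t (J y) (√q * v)) ∂μ ∂stdG

namespace IsJetFamily

lemma measurable_heat (h : IsJetFamily μ J D) (hΨ : Measurable Ψ) (t : ℝ) :
    Measurable fun z : Y × ℝ => Ψ (heat t (J z.1) z.2) :=
  hΨ.comp (stronglyMeasurable_uncurry_heat h.measurable.stronglyMeasurable t).measurable

lemma exists_integrable_bound (h : IsJetFamily μ J D) (hΨ : HasPolynomialGrowth Ψ) :
    ∃ B : Y → ℝ, Integrable B μ ∧ ∀ t x y, |Ψ (heat t (J y) x)| ≤ B y := by
  obtain ⟨c, k, hle⟩ := hΨ.exists_le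
  exact ⟨fun y => c * D y ^ k, (h.integrable_pow k).const_mul c, fun t x y =>
    hle _ (h.isBoundedJet y).one_le _ ((h.isBoundedJet y).heat_mem t x)⟩

lemma integrable_heat (h : IsJetFamily μ J D) (hΨ : HasPolynomialGrowth Ψ) (t x : ℝ) :
    Integrable (fun y => Ψ (heat t (J y) x)) μ := by
  obtain ⟨B, hB, hle⟩ := h.exists_integrable_bound hΨ
  exact hB.mono' ((h.measurable_heat hΨ.measurable t).comp (by fun_prop :
    Measurable fun y : Y => (y, x))).aestronglyMeasurable (.of_forall (hle t x))

lemma integrable_prod_heat (h : IsJetFamily μ J D) (hΨ : HasPolynomialGrowth Ψ) (q t : ℝ) :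
    Integrable (fun z : Y × ℝ => Ψ (heat t (J z.1) (√q * z.2))) (μ.prod stdG) := by
  obtain ⟨B, hB, hle⟩ := h.exists_integrable_bound hΨ
  exact (hB.comp_fst stdG).mono' ((h.measurable_heat hΨ.measurable t).comp (by fun_prop :
    Measurable fun z : Y × ℝ => (z.1, √q * z.2))).aestronglyMeasurable
    (.of_forall fun z => hle t _ z.1)

lemma energy_nonneg (h : IsJetFamily μ J D) (hΨ : ∀ z, 0 ≤ z.1 → 0 ≤ Ψ z) (q t : ℝ) :
    0 ≤ energy μ J Ψ q t :=
  integral_nonneg fun _ => integral_nonneg fun y => hΨ _ ((h.isBoundedJet y).heat_fst_pos t _).le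

lemma exists_integrable_bound_integral (h : IsJetFamily μ J D) (hΨ : HasPolynomialGrowth Ψ)
    (ρ : ℝ) : ∃ B : Y → ℝ, Integrable B μ ∧
      ∀ y, ∀ q ∈ Icc 0 ρ, |∫ v, Ψ (condMean ρ q (J y) v) ∂stdG| ≤ B y := by
  obtain ⟨B, hB, hle⟩ := h.exists_integrable_bound hΨ
  refine ⟨B, hB, fun y q _ => ?_⟩
  simpa [condMean] using norm_integral_le_of_norm_le_const (μ := stdG)
    (.of_forall fun v => (Real.norm_eq_abs _).trans_le (hle (ρ - q) (√q * v) y))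

variable [SFinite μ]

lemma energy_eq_integral_condMean (h : IsJetFamily μ J D) (hΨ : HasPolynomialGrowth Ψ) (ρ q : ℝ) :
    energy μ J Ψ q (ρ - q) = ∫ y, ∫ v, Ψ (condMean ρ q (J y) v) ∂stdG ∂μ :=
  (integral_integral_swap (h.integrable_prod_heat hΨ q (ρ - q))).symm

lemma hasDerivWithinAt_energy (h : IsJetFamily μ J D) {Ψ' : ℝ × ℝ × ℝ → ℝ}
    (hΨ : HasPolynomialGrowth Ψ) (hΨ' : HasPolynomialGrowth Ψ')
    (hd : ∀ y, ∀ q ∈ Icc 0 ρ, HasDerivWithinAt (fun q => ∫ v, Ψ (condMean ρ q (J y) v) ∂stdG)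
      (∫ v, Ψ' (condMean ρ q (J y) v) ∂stdG) (Icc 0 ρ) q) (hq : q ∈ Icc 0 ρ) :
    HasDerivWithinAt (fun q => energy μ J Ψ q (ρ - q)) (energy μ J Ψ' q (ρ - q)) (Icc 0 ρ) q := by
  obtain ⟨B, hB, hle⟩ := h.exists_integrable_bound_integral hΨ' ρ
  simp only [h.energy_eq_integral_condMean hΨ, h.energy_eq_integral_condMean hΨ']
  exact hasDerivWithinAt_integral_of_dominated (convex_Icc 0 ρ)
    (fun q _ => (h.integrable_prod_heat hΨ q (ρ - q)).integral_prod_left) hB hd hle hq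

lemma hasDerivWithinAt_negEntropy (h : IsJetFamily μ J D) (hq : q ∈ Icc 0 ρ) :
    HasDerivWithinAt (fun q => energy μ J entropyDensity q (ρ - q))
      (energy μ J fisherDensity q (ρ - q)) (Icc 0 ρ) q :=
  h.hasDerivWithinAt_energy hasPolynomialGrowth_entropyDensity hasPolynomialGrowth_fisherDensity
    (fun y _ => (h.isBoundedJet y).hasDerivWithinAt_integral_entropyDensity) hq

lemma hasDerivWithinAt_fisher (h : IsJetFamily μ J D) (hq : q ∈ Icc 0 ρ) :
    HasDerivWithinAt (fun q => energy μ J fisherDensity q (ρ - q))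
      (energy μ J curvatureDensity q (ρ - q)) (Icc 0 ρ) q :=
  h.hasDerivWithinAt_energy hasPolynomialGrowth_fisherDensity hasPolynomialGrowth_curvatureDensity
    (fun y _ => (h.isBoundedJet y).hasDerivWithinAt_integral_fisherDensity) hq

lemma continuousOn_curvature (h : IsJetFamily μ J D) (ρ : ℝ) :
    ContinuousOn (fun q => energy μ J curvatureDensity q (ρ - q)) (Icc 0 ρ) := by
  have growth := hasPolynomialGrowth_curvatureDensity
  obtain ⟨B, hB, hle⟩ := h.exists_integrable_bound_integral growth ρ
  simp only [h.energy_eq_integral_condMean growth]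
  refine continuousOn_of_dominated (fun q _ =>
    (h.integrable_prod_heat growth q (ρ - q)).integral_prod_left.aestronglyMeasurable)
    (fun q hq => .of_forall fun y => hle y q hq) hB (.of_forall fun y => ?_)
  have hy := h.isBoundedJet y
  obtain ⟨c, k, hck⟩ := growth.exists_le
  exact continuousOn_integral_comp_condMean (convex_jetBox _) (isCompact_jetBox _).isClosed
    (continuousOn_curvatureDensity hy.pos) (hck _ hy.one_le) hy.stronglyMeasurable hy.norm_le
    hy.mem ρ

lemma contDiffOn_negEntropy (h : IsJetFamily μ J D) (hρ : 0 < ρ) :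
    ContDiffOn ℝ 2 (fun q => energy μ J entropyDensity q (ρ - q)) (Icc 0 ρ) :=
  contDiffOn_two_Icc hρ (fun _ => h.hasDerivWithinAt_negEntropy)
    (fun _ => h.hasDerivWithinAt_fisher) (h.continuousOn_curvature ρ)

lemma convexOn_negEntropy (h : IsJetFamily μ J D) (ρ : ℝ) :
    ConvexOn ℝ (Icc 0 ρ) (fun q => energy μ J entropyDensity q (ρ - q)) :=
  convexOn_of_hasDerivWithinAt2_nonneg (convex_Icc 0 ρ)
    (fun _ hq => (h.hasDerivWithinAt_negEntropy hq).continuousWithinAt)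
    (fun _ hq => (h.hasDerivWithinAt_negEntropy (interior_subset hq)).mono interior_subset)
    (fun _ hq => (h.hasDerivWithinAt_fisher (interior_subset hq)).mono interior_subset)
    fun _ _ => h.energy_nonneg (fun _ => curvatureDensity_nonneg) _ _

lemma monotoneOn_negEntropy (h : IsJetFamily μ J D) (ρ : ℝ) :
    MonotoneOn (fun q => energy μ J entropyDensity q (ρ - q)) (Icc 0 ρ) :=
  monotoneOn_of_hasDerivWithinAt_nonneg (convex_Icc 0 ρ)
    (fun _ hq => (h.hasDerivWithinAt_negEntropy hq).continuousWithinAt)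
    (fun _ hq => (h.hasDerivWithinAt_negEntropy (interior_subset hq)).mono interior_subset)
    fun _ _ => h.energy_nonneg (fun _ => fisherDensity_nonneg) _ _

end IsJetFamily
end JetFamily

section GaussianAverages

open Set

lemma integrable_add_mul_stdG (x σ : ℝ) : Integrable (fun w => x + σ * w) stdG := by
  simpa using (integrable_const x).add ((integrable_pow_stdG 1).const_mul σ)

lemma integral_add_mul_stdG (x σ : ℝ) : ∫ w, (x + σ * w) ∂stdG = x := by
  rw [integral_add (integrable_const x) (by simpa using (integrable_pow_stdG 1).const_mul σ),
    integral_const_mul, integral_id_stdG]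
  simp

lemma add_mul_sq_eq (x σ : ℝ) :
    (fun w => (x + σ * w) ^ 2) = fun w => x * (x + 2 * σ * w) + σ ^ 2 * w ^ 2 := by
  ext w; ring

lemma integrable_add_mul_sq_stdG (x σ : ℝ) : Integrable (fun w => (x + σ * w) ^ 2) stdG :=
  add_mul_sq_eq x σ ▸ ((integrable_add_mul_stdG x (2 * σ)).const_mul x).add
    ((integrable_pow_stdG 2).const_mul (σ ^ 2))

lemma integral_add_mul_sq_stdG (x σ : ℝ) : ∫ w, (x + σ * w) ^ 2 ∂stdG = x ^ 2 + σ ^ 2 := by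
  rw [add_mul_sq_eq, integral_add ((integrable_add_mul_stdG x (2 * σ)).const_mul x)
    ((integrable_pow_stdG 2).const_mul (σ ^ 2)), integral_const_mul, integral_const_mul,
    integral_add_mul_stdG, integral_sq_stdG]
  ring

/-- Jensen's inequality for the convex function `z ↦ M z ^ 2 / 2 - F z`. -/
lemma heat_le_add {F F' F'' : ℝ → ℝ} {C M : ℝ} (hd : ∀ x, HasDerivAt F (F' x) x)
    (hd' : ∀ x, HasDerivAt F' (F'' x) x) (hC : ∀ x, |F x| ≤ C) (hM : ∀ x, F'' x ≤ M) {δ : ℝ}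
    (hδ : 0 ≤ δ) (x : ℝ) : heat δ F x ≤ F x + M * δ / 2 := by
  have convex : ConvexOn ℝ univ fun z => M * z ^ 2 / 2 - F z := by
    refine convexOn_of_hasDerivWithinAt2_nonneg (f' := fun z => M * z - F' z)
      (f'' := fun z => M - F'' z) convex_univ (fun z _ => ?_) (fun z _ => ?_) (fun z _ => ?_)
      fun z _ => sub_nonneg.2 (hM z)
    · exact ((by fun_prop : ContinuousAt (fun z : ℝ => M * z ^ 2 / 2) z).sub
        (hd z).continuousAt).continuousWithinAt
    · refine ((((hasDerivAt_pow 2 z).const_mul M).div_const 2).sub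
        (hd z)).hasDerivWithinAt.congr_deriv ?_
      push_cast
      ring
    · simpa using ((hasDerivAt_id' z).const_mul M).fun_sub (hd' z)
  have hF : Integrable (fun w => F (x + √δ * w)) stdG :=
    integrable_comp_stdG (stronglyMeasurable_of_hasDerivAt hd) hC (by fun_prop)
  have hsq : Integrable (fun w : ℝ => M * (x + √δ * w) ^ 2 / 2) stdG :=
    ((integrable_add_mul_sq_stdG x √δ).const_mul M).div_const 2
  have jensen := convex.map_integral_le
    (fun z _ => ((by fun_prop : ContinuousAt (fun z : ℝ => M * z ^ 2 / 2) z).sub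
        (hd z).continuousAt).continuousWithinAt) isClosed_univ (.of_forall fun w => mem_univ _)
    (integrable_add_mul_stdG x √δ) (hsq.sub hF)
  rw [integral_sub hsq hF, integral_add_mul_stdG, integral_div, integral_const_mul,
    integral_add_mul_sq_stdG, sq_sqrt hδ] at jensen
  change _ ≤ _ - heat δ F x at jensen
  linarith

lemma abs_heat_add_sub_heat_le {F F' F'' : ℝ → ℝ} {C M : ℝ} (hd : ∀ x, HasDerivAt F (F' x) x)
    (hd' : ∀ x, HasDerivAt F' (F'' x) x) (hC : ∀ x, |F x| ≤ C) (hM : ∀ x, |F'' x| ≤ M) {s δ : ℝ}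
    (hs : 0 ≤ s) (hδ : 0 ≤ δ) (x : ℝ) : |heat (s + δ) F x - heat s F x| ≤ M * δ / 2 := by
  have hF := stronglyMeasurable_of_hasDerivAt hd
  have small (z : ℝ) : |heat δ F z - F z| ≤ M * δ / 2 := by
    have upper := heat_le_add hd hd' hC (fun x => (abs_le.1 (hM x)).2) hδ z
    have lower := heat_le_add (fun x => (hd x).neg) (fun x => (hd' x).neg) (C := C)
      (fun x => by simpa using hC x) (fun x => neg_le.2 (abs_le.1 (hM x)).1) hδ z
    simp only [heat, Pi.neg_apply, integral_neg] at upper lower ⊢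
    exact abs_le.2 ⟨by linarith, by linarith⟩
  rw [← heat_heat hs hδ hF hC]
  have := norm_heat_le (F := fun z => heat δ F z - F z) small s x
  rwa [heat, integral_sub (integrable_comp_stdG (stronglyMeasurable_heat hF δ)
    (fun x => norm_heat_le hC δ x) (by fun_prop)) (integrable_comp_stdG hF hC (by fun_prop))]
    at this

lemma integral_mul_log_le_integral_mul_log {Y : Type*} [MeasurableSpace Y] {μ : Measure Y}
    {f g : Y → ℝ} (hf : ∀ y, 0 < f y) (hg : ∀ y, 0 < g y) (hfi : Integrable f μ)
    (hgi : Integrable g μ) (hff : Integrable (fun y => f y * log (f y)) μ)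
    (hfg : Integrable (fun y => f y * log (g y)) μ) (h : ∫ y, g y ∂μ ≤ ∫ y, f y ∂μ) :
    ∫ y, f y * log (g y) ∂μ ≤ ∫ y, f y * log (f y) ∂μ := by
  have pointwise (y : Y) : f y * log (g y) - f y * log (f y) ≤ g y - f y := by
    have := mul_le_mul_of_nonneg_left (log_le_sub_one_of_pos (div_pos (hg y) (hf y))) (hf y).le
    rwa [log_div (hg y).ne' (hf y).ne', mul_sub, mul_sub, mul_div_cancel₀ _ (hf y).ne',
      mul_one] at this
  have := integral_mono (hfg.sub hff) (hgi.sub hfi) pointwise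
  simp only [Pi.sub_apply] at this
  rw [integral_sub hfg hff, integral_sub hgi hfi] at this
  linarith

end GaussianAverages

section RegularModel

open Set Filter

lemma norm_mul_le_mul_pow_succ {E : Type*} [SeminormedAddCommGroup E] {p : E → ℝ} {k B d : ℝ}
    {n : ℕ} (hk : |k| ≤ B * d ^ n) (hp : ∀ z, ‖p z‖ ≤ ‖z‖) {z : E} (hz : ‖z‖ ≤ d) :
    ‖k * p z‖ ≤ B * d ^ (n + 1) := by
  rw [norm_mul, pow_succ, ← mul_assoc]
  exact mul_le_mul hk ((hp z).trans hz) (norm_nonneg _) ((abs_nonneg _).trans hk)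

variable {Y : Type*} [MeasurableSpace Y] {μ : Measure Y} {J : Y → ℝ → ℝ × ℝ × ℝ} {D : Y → ℝ}

lemma abs_integral_le_mul_integral_fst {A : Type*} [MeasurableSpace A] {ν : Measure A}
    {G : A → ℝ × ℝ × ℝ} (hG : Integrable G ν) (p : ℝ × ℝ × ℝ →L[ℝ] ℝ) {s : ℝ}
    (h : ∀ α, |p (G α)| ≤ s * (G α).1) : |p (∫ α, G α ∂ν)| ≤ s * (∫ α, G α ∂ν).1 := by
  rw [← p.integral_comp_comm hG, fst_integral hG, ← integral_const_mul]
  exact norm_integral_le_of_norm_le (f := fun α => p (G α)) (hG.fst.const_mul s) (.of_forall h)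

namespace IsJetFamily

variable {K : Y → ℝ} {B : ℝ} {n : ℕ} {p p' : ℝ × ℝ × ℝ → ℝ}

lemma integrable_mul_heat (h : IsJetFamily μ J D) (hK : Measurable K)
    (hKD : ∀ y, |K y| ≤ B * D y ^ n) (hpm : Measurable p) (hp : ∀ z, ‖p z‖ ≤ ‖z‖) (t x : ℝ) :
    Integrable (fun y => K y * p (heat t (J y) x)) μ :=
  ((h.integrable_pow (n + 1)).const_mul B).mono' (hK.mul ((h.measurable_heat hpm t).comp
    (by fun_prop : Measurable fun y : Y => (y, x)))).aestronglyMeasurable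
    (.of_forall fun y => norm_mul_le_mul_pow_succ (hKD y) hp
      (norm_heat_le (h.isBoundedJet y).norm_le t x))

lemma integrable_mul (h : IsJetFamily μ J D) (hK : Measurable K) (hKD : ∀ y, |K y| ≤ B * D y ^ n)
    (hpm : Measurable p) (hp : ∀ z, ‖p z‖ ≤ ‖z‖) (x : ℝ) :
    Integrable (fun y => K y * p (J y x)) μ := by
  simpa using h.integrable_mul_heat hK hKD hpm hp 0 x

lemma integral_mul_heat_fst [SFinite μ] (h : IsJetFamily μ J D) (hK : Measurable K)
    (hKD : ∀ y, |K y| ≤ B * D y ^ n) (t x : ℝ) :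
    ∫ y, K y * (heat t (J y) x).1 ∂μ = heat t (fun x => ∫ y, K y * (J y x).1 ∂μ) x := by
  have hi : Integrable (fun z : Y × ℝ => K z.1 * (J z.1 (x + √t * z.2)).1) (μ.prod stdG) :=
    (((h.integrable_pow (n + 1)).const_mul B).comp_fst stdG).mono'
      ((hK.comp measurable_fst).mul (h.measurable.comp (by fun_prop :
        Measurable fun z : Y × ℝ => (z.1, x + √t * z.2))).fst).aestronglyMeasurable
      (.of_forall fun z => norm_mul_le_mul_pow_succ (hKD z.1) norm_fst_le
        ((h.isBoundedJet z.1).norm_le _))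
  rw [heat, ← integral_integral_swap hi]
  exact integral_congr_ae (.of_forall fun y =>
    (congrArg (K y * ·) ((h.isBoundedJet y).heat_fst t x)).symm.trans
      (integral_const_mul _ _).symm)

lemma hasDerivAt_integral_mul (h : IsJetFamily μ J D) (hK : Measurable K)
    (hKD : ∀ y, |K y| ≤ B * D y ^ n) (hpm : Measurable p) (hp : ∀ z, ‖p z‖ ≤ ‖z‖)
    (hpm' : Measurable p') (hp' : ∀ z, ‖p' z‖ ≤ ‖z‖)
    (hd : ∀ y x, HasDerivAt (fun x => p (J y x)) (p' (J y x)) x) (x : ℝ) :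
    HasDerivAt (fun x => ∫ y, K y * p (J y x) ∂μ) (∫ y, K y * p' (J y x) ∂μ) x :=
  (hasDerivAt_integral_of_dominated_loc_of_deriv_le
    (F := fun x y => K y * p (J y x)) (F' := fun x y => K y * p' (J y x)) univ_mem
    (.of_forall fun x => (h.integrable_mul hK hKD hpm hp x).aestronglyMeasurable)
    (h.integrable_mul hK hKD hpm hp x)
    (h.integrable_mul hK hKD hpm' hp' x).aestronglyMeasurable
    (.of_forall fun y x _ => norm_mul_le_mul_pow_succ (hKD y) hp' ((h.isBoundedJet y).norm_le x))
    ((h.integrable_pow (n + 1)).const_mul B) (.of_forall fun y x _ => (hd y x).const_mul (K y))).2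

end IsJetFamily

/-- A regular statistical model: the jets `J y` of a family of probability densities with
logarithm bounded by `L`, with first and second derivatives bounded, relatively to the density, by
`S` (the score) and `H`, with Fisher information at most `C` and weighted second order term at
most `M`. -/
structure IsRegularModel (μ : Measure Y) (J : Y → ℝ → ℝ × ℝ × ℝ) (D S H L : Y → ℝ) (C M : ℝ) :
    Prop extends IsJetFamily μ J D where
  measurable_score : Measurable S
  measurable_hess : Measurable H
  measurable_log : Measurable L
  score_mem : ∀ y, S y ∈ Icc 0 (D y)
  hess_mem : ∀ y, H y ∈ Icc 0 (D y)
  log_mem : ∀ y, L y ∈ Icc 0 (D y)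
  mem_Icc_exp : ∀ y x, (J y x).1 ∈ Icc (exp (-L y)) (exp (L y))
  abs_deriv_le : ∀ y x, |(J y x).2.1| ≤ S y * (J y x).1
  abs_deriv_two_le : ∀ y x, |(J y x).2.2| ≤ H y * (J y x).1
  integral_eq_one : ∀ x, ∫ y, (J y x).1 ∂μ = 1
  fisher_le : ∀ x, ∫ y, S y ^ 2 * (J y x).1 ∂μ ≤ C
  curvature_le : ∀ x, ∫ y, L y * H y * (J y x).1 ∂μ ≤ M

namespace IsRegularModel

variable {S H L ℓ : Y → ℝ} {C M a b q s δ : ℝ}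

lemma abs_heat_le_mul (h : IsRegularModel μ J D S H L C M) (t x : ℝ) (y : Y) :
    |(heat t (J y) x).2.1| ≤ S y * (heat t (J y) x).1 :=
  abs_integral_le_mul_integral_fst ((h.isBoundedJet y).integrable (by fun_prop))
    ((ContinuousLinearMap.fst ℝ ℝ ℝ).comp (ContinuousLinearMap.snd ℝ ℝ (ℝ × ℝ)))
    fun _ => h.abs_deriv_le y _

lemma abs_log_heat_le (h : IsRegularModel μ J D S H L C M) (t x : ℝ) (y : Y) :
    |log (heat t (J y) x).1| ≤ L y := by
  have hJ := h.isBoundedJet y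
  obtain ⟨lower, upper⟩ : (heat t (J y) x).1 ∈ Icc (exp (-L y)) (exp (L y)) :=
    hJ.heat_fst t x ▸ heat_mem (convex_Icc _ _) isClosed_Icc
      (stronglyMeasurable_of_hasDerivAt hJ.hasDerivAt_fst)
      (fun x => (norm_fst_le _).trans (hJ.norm_le x)) (h.mem_Icc_exp y) t x
  have pos := hJ.heat_fst_pos t x
  exact abs_le.2 ⟨(le_log_iff_exp_le pos).2 lower, (log_le_iff_le_exp pos).2 upper⟩

lemma fisherDensity_heat_le (h : IsRegularModel μ J D S H L C M) (t x : ℝ) (y : Y) :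
    fisherDensity (heat t (J y) x) ≤ S y ^ 2 * (heat t (J y) x).1 / 2 := by
  have pos := (h.isBoundedJet y).heat_fst_pos t x
  rw [fisherDensity, div_le_div_iff₀ (by positivity) two_pos, ← sq_abs]
  nlinarith [pow_le_pow_left₀ (abs_nonneg _) (h.abs_heat_le_mul t x y) 2]

lemma abs_score_sq_le (h : IsRegularModel μ J D S H L C M) (y : Y) :
    |S y ^ 2| ≤ 1 * D y ^ 2 := by
  rw [one_mul, abs_pow, abs_of_nonneg (h.score_mem y).1]
  exact pow_le_pow_left₀ (h.score_mem y).1 (h.score_mem y).2 2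

lemma abs_le_of_abs_le_log (h : IsRegularModel μ J D S H L C M) (hℓ : ∀ y, |ℓ y| ≤ L y) (y : Y) :
    |ℓ y| ≤ 1 * D y ^ 1 := by
  rw [one_mul, pow_one]; exact (hℓ y).trans (h.log_mem y).2

lemma abs_deriv_two_integrand_le (h : IsRegularModel μ J D S H L C M) (hℓ : ∀ y, |ℓ y| ≤ L y)
    (x : ℝ) (y : Y) : |ℓ y * (J y x).2.2| ≤ L y * H y * (J y x).1 := by
  rw [abs_mul, mul_assoc]
  exact mul_le_mul (hℓ y) (h.abs_deriv_two_le y x) (abs_nonneg _) (h.log_mem y).1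

lemma abs_log_mul_hess_le (h : IsRegularModel μ J D S H L C M) (y : Y) :
    |L y * H y| ≤ 1 * D y ^ 2 := by
  rw [one_mul, abs_mul, abs_of_nonneg (h.log_mem y).1, abs_of_nonneg (h.hess_mem y).1, pow_two]
  exact mul_le_mul (h.log_mem y).2 (h.hess_mem y).2 (h.hess_mem y).1 (h.isBoundedJet y).pos.le

lemma integrable_heat_fst (h : IsRegularModel μ J D S H L C M) (t x : ℝ) :
    Integrable (fun y => (heat t (J y) x).1) μ := by
  simpa using h.integrable_mul_heat (K := fun _ => 1) (B := 1) (n := 0) measurable_const (by simp)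
    measurable_fst norm_fst_le t x

lemma measurable_log_heat (h : IsRegularModel μ J D S H L C M) (t x : ℝ) :
    Measurable fun y => log (heat t (J y) x).1 :=
  Real.measurable_log.comp
    ((h.measurable_heat measurable_fst t).comp (by fun_prop : Measurable fun y : Y => (y, x)))

lemma integrable_mul_log_heat (h : IsRegularModel μ J D S H L C M) (t r x : ℝ) :
    Integrable (fun y => (heat r (J y) x).1 * log (heat t (J y) x).1) μ := by
  simpa only [mul_comm] using h.integrable_mul_heat (h.measurable_log_heat t x)
    (h.abs_le_of_abs_le_log (h.abs_log_heat_le t x)) measurable_fst norm_fst_le r x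

variable [SFinite μ]

lemma integral_heat_eq_one (h : IsRegularModel μ J D S H L C M) (t x : ℝ) :
    ∫ y, (heat t (J y) x).1 ∂μ = 1 := by
  simpa [h.integral_eq_one, heat] using h.integral_mul_heat_fst (K := fun _ => 1) (B := 1) (n := 0)
    measurable_const (by simp) t x

lemma integral_fisherDensity_heat_le (h : IsRegularModel μ J D S H L C M) (t x : ℝ) :
    ∫ y, fisherDensity (heat t (J y) x) ∂μ ≤ C / 2 := by
  have hS := h.measurable_score.pow_const 2
  have nonneg (x : ℝ) : 0 ≤ ∫ y, S y ^ 2 * (J y x).1 ∂μ := integral_nonneg fun y =>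
    mul_nonneg (sq_nonneg _) ((exp_pos _).le.trans (h.mem_Icc_exp y x).1)
  have measurable : StronglyMeasurable fun x => ∫ y, S y ^ 2 * (J y x).1 ∂μ :=
    ((hS.comp measurable_fst).mul h.measurable.fst).stronglyMeasurable.integral_prod_left'
  calc ∫ y, fisherDensity (heat t (J y) x) ∂μ
      ≤ ∫ y, S y ^ 2 * (heat t (J y) x).1 / 2 ∂μ :=
        integral_mono (h.integrable_heat hasPolynomialGrowth_fisherDensity t x)
          ((h.integrable_mul_heat hS h.abs_score_sq_le measurable_fst norm_fst_le t x).div_const 2)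
          (h.fisherDensity_heat_le t x)
    _ = heat t (fun x => ∫ y, S y ^ 2 * (J y x).1 ∂μ) x / 2 := by
        rw [integral_div, h.integral_mul_heat_fst hS h.abs_score_sq_le]
    _ ≤ C / 2 := by
        have := heat_mem (convex_Iic C) isClosed_Iic measurable
          (fun x => (Real.norm_of_nonneg (nonneg x)).le.trans (h.fisher_le x)) h.fisher_le t x
        exact div_le_div_of_nonneg_right this two_pos.le

lemma fisher_le_half (h : IsRegularModel μ J D S H L C M) (q t : ℝ) :
    energy μ J fisherDensity q t ≤ C / 2 := by
  refine (integral_mono_of_nonneg (.of_forall fun v => integral_nonneg fun y => ?_)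
    (integrable_const (C / 2)) (.of_forall fun v =>
      h.integral_fisherDensity_heat_le t _)).trans (by simp)
  exact fisherDensity_nonneg ((h.isBoundedJet y).heat_fst_pos t _).le

lemma abs_negEntropy_sub_le (h : IsRegularModel μ J D S H L C M) {ρ : ℝ} (ha : a ∈ Icc 0 ρ)
    (hb : b ∈ Icc 0 ρ) :
    |energy μ J entropyDensity a (ρ - a) - energy μ J entropyDensity b (ρ - b)|
      ≤ C / 2 * |a - b| := by
  refine (convex_Icc 0 ρ).norm_image_sub_le_of_norm_hasDerivWithin_le
    (fun x hx => h.hasDerivWithinAt_negEntropy hx) (fun x _ => ?_) hb ha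
  rw [Real.norm_of_nonneg (h.energy_nonneg (fun _ => fisherDensity_nonneg) _ _)]
  exact h.fisher_le_half _ _

lemma abs_integral_mul_heat_sub_le (h : IsRegularModel μ J D S H L C M) (hs : 0 ≤ s) (hδ : 0 ≤ δ)
    (hℓm : Measurable ℓ) (hℓ : ∀ y, |ℓ y| ≤ L y) (x : ℝ) :
    |∫ y, ℓ y * (heat (s + δ) (J y) x).1 ∂μ - ∫ y, ℓ y * (heat s (J y) x).1 ∂μ|
      ≤ M * δ / 2 := by
  have hℓD := h.abs_le_of_abs_le_log hℓ
  have norm_mid (z : ℝ × ℝ × ℝ) : ‖z.2.1‖ ≤ ‖z‖ := (norm_fst_le _).trans (norm_snd_le _)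
  have norm_last (z : ℝ × ℝ × ℝ) : ‖z.2.2‖ ≤ ‖z‖ := (norm_snd_le _).trans (norm_snd_le _)
  rw [h.integral_mul_heat_fst hℓm hℓD, h.integral_mul_heat_fst hℓm hℓD]
  refine abs_heat_add_sub_heat_le (C := ∫ y, 1 * D y ^ 2 ∂μ)
    (h.hasDerivAt_integral_mul hℓm hℓD measurable_fst norm_fst_le (by fun_prop) norm_mid
      fun y => (h.isBoundedJet y).hasDerivAt_fst)
    (h.hasDerivAt_integral_mul hℓm hℓD (by fun_prop) norm_mid (by fun_prop) norm_last
      fun y => (h.isBoundedJet y).hasDerivAt_snd) (fun x => ?_) (fun x => ?_) hs hδ x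
  · exact norm_integral_le_of_norm_le ((h.integrable_pow 2).const_mul 1) (.of_forall fun y =>
      norm_mul_le_mul_pow_succ (hℓD y) norm_fst_le ((h.isBoundedJet y).norm_le x))
  · exact (norm_integral_le_of_norm_le (f := fun y => ℓ y * (J y x).2.2) (h.integrable_mul
      (h.measurable_log.mul h.measurable_hess) h.abs_log_mul_hess_le measurable_fst norm_fst_le x)
      (.of_forall (h.abs_deriv_two_integrand_le hℓ x))).trans (h.curvature_le x)

/-- By Gibbs' inequality each of the two entropies is a supremum over `ℓ` of the linear functionals
of `abs_integral_mul_heat_sub_le`. -/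
lemma abs_integral_entropyDensity_sub_le (h : IsRegularModel μ J D S H L C M) (hs : 0 ≤ s)
    (hδ : 0 ≤ δ) (x : ℝ) :
    |∫ y, entropyDensity (heat (s + δ) (J y) x) ∂μ - ∫ y, entropyDensity (heat s (J y) x) ∂μ|
      ≤ M * δ / 2 := by
  have gibbs (t r : ℝ) : ∫ y, (heat r (J y) x).1 * log (heat t (J y) x).1 ∂μ
      ≤ ∫ y, entropyDensity (heat r (J y) x) ∂μ :=
    integral_mul_log_le_integral_mul_log (fun y => (h.isBoundedJet y).heat_fst_pos r x)
      (fun y => (h.isBoundedJet y).heat_fst_pos t x) (h.integrable_heat_fst r x)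
      (h.integrable_heat_fst t x) (h.integrable_mul_log_heat r r x)
      (h.integrable_mul_log_heat t r x)
      ((h.integral_heat_eq_one t x).trans (h.integral_heat_eq_one r x).symm).le
  have increment (t : ℝ) := h.abs_integral_mul_heat_sub_le hs hδ (h.measurable_log_heat t x)
    (h.abs_log_heat_le t x) x
  simp only [mul_comm (log _), abs_le] at increment
  rw [abs_le]
  constructor
  · linarith [(increment s).1, gibbs s (s + δ), show ∫ y, entropyDensity (heat s (J y) x) ∂μ
      = ∫ y, (heat s (J y) x).1 * log (heat s (J y) x).1 ∂μ from rfl]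
  · linarith [(increment (s + δ)).2, gibbs (s + δ) s,
      show ∫ y, entropyDensity (heat (s + δ) (J y) x) ∂μ
        = ∫ y, (heat (s + δ) (J y) x).1 * log (heat (s + δ) (J y) x).1 ∂μ from rfl]

lemma abs_negEntropy_add_sub_le (h : IsRegularModel μ J D S H L C M) (hs : 0 ≤ s) (hδ : 0 ≤ δ)
    (q : ℝ) :
    |energy μ J entropyDensity q (s + δ) - energy μ J entropyDensity q s| ≤ M * δ / 2 := by
  have integrable (t : ℝ) :
      Integrable (fun v => ∫ y, entropyDensity (heat t (J y) (√q * v)) ∂μ) stdG :=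
    (h.integrable_prod_heat hasPolynomialGrowth_entropyDensity q t).integral_prod_right
  rw [energy, energy, ← integral_sub (integrable _) (integrable _)]
  have bound := norm_integral_le_of_norm_le_const (μ := stdG) (.of_forall fun v =>
    (Real.norm_eq_abs _).trans_le (h.abs_integral_entropyDensity_sub_le hs hδ (√q * v)))
  rwa [probReal_univ, mul_one] at bound

lemma integral_integral_add_log_mul (h : IsRegularModel μ J D S H L C M) {κ : Y → ℝ}
    (hκ : Measurable κ) {B : ℝ} {n : ℕ} (hκD : ∀ y, |κ y| ≤ B * D y ^ n) {t : ℝ} (hq : 0 ≤ q)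
    (ht : 0 ≤ t) :
    ∫ v, ∫ y, (κ y + log (heat t (J y) (√q * v)).1) * (heat t (J y) (√q * v)).1 ∂μ ∂stdG
      = ∫ v, ∫ y, κ y * (J y (√(q + t) * v)).1 ∂μ ∂stdG + energy μ J entropyDensity q t := by
  have measurable : StronglyMeasurable fun x => ∫ y, κ y * (J y x).1 ∂μ :=
    ((hκ.comp measurable_fst).mul h.measurable.fst).stronglyMeasurable.integral_prod_left'
  have bounded (x : ℝ) : ‖∫ y, κ y * (J y x).1 ∂μ‖ ≤ ∫ y, B * D y ^ (n + 1) ∂μ :=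
    norm_integral_le_of_norm_le ((h.integrable_pow (n + 1)).const_mul B) (.of_forall fun y =>
      norm_mul_le_mul_pow_succ (hκD y) norm_fst_le ((h.isBoundedJet y).norm_le x))
  have split (x : ℝ) : ∫ y, (κ y + log (heat t (J y) x).1) * (heat t (J y) x).1 ∂μ
      = heat t (fun x => ∫ y, κ y * (J y x).1 ∂μ) x + ∫ y, entropyDensity (heat t (J y) x) ∂μ := by
    rw [← h.integral_mul_heat_fst hκ hκD, ← integral_add
      (h.integrable_mul_heat hκ hκD measurable_fst norm_fst_le t x)
      (h.integrable_heat hasPolynomialGrowth_entropyDensity t x)]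
    exact integral_congr_ae (.of_forall fun y => by simp only [entropyDensity]; ring)
  simp only [split]
  rw [integral_add (integrable_comp_stdG (stronglyMeasurable_heat measurable t)
    (norm_heat_le bounded t) (by fun_prop))
    (h.integrable_prod_heat hasPolynomialGrowth_entropyDensity q t).integral_prod_right,
    integral_heat hq ht measurable bounded, energy]

lemma abs_information_sub_le (h : IsRegularModel μ J D S H L C M) (hq : 0 ≤ q) (ha : q ≤ a)
    (hab : a ≤ b) :
    |(energy μ J entropyDensity b 0 - energy μ J entropyDensity q (b - q))
      - (energy μ J entropyDensity a 0 - energy μ J entropyDensity q (a - q))|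
      ≤ (C / 2 + M) * (b - a) := by
  have endpoint := h.abs_negEntropy_sub_le (ρ := b) (a := b) (b := a) ⟨by linarith, le_rfl⟩
    ⟨by linarith, hab⟩
  have initial := h.abs_negEntropy_add_sub_le (s := 0) (δ := b - a) le_rfl (by linarith) a
  have final := h.abs_negEntropy_add_sub_le (s := a - q) (δ := b - a) (by linarith) (by linarith) q
  rw [sub_self, abs_of_nonneg (sub_nonneg.2 hab)] at endpoint
  rw [zero_add] at initial
  rw [sub_add_sub_cancel'] at final
  rw [abs_le] at *
  constructor <;> linarith

end IsRegularModel
end RegularModel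

section Likelihood

open Set Filter Topology

variable {A : Type*} [MeasurableSpace A]

lemma measurable_of_hasDerivAt {F F' : ℝ → A → ℝ} (hF : Measurable fun z : ℝ × A => F z.1 z.2)
    (hd : ∀ α x, HasDerivAt (fun x => F x α) (F' x α) x) :
    Measurable fun z : ℝ × A => F' z.1 z.2 := by
  have tendsto_step : Tendsto (fun n : ℕ => 1 / ((n : ℝ) + 1)) atTop (𝓝[≠] 0) :=
    tendsto_nhdsWithin_iff.2 ⟨tendsto_one_div_add_atTop_nhds_zero_nat,
      .of_forall fun n => Nat.one_div_pos_of_nat.ne'⟩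
  refine measurable_of_tendsto_metrizable (f := fun (n : ℕ) (z : ℝ × A) =>
    (1 / ((n : ℝ) + 1))⁻¹ • (F (z.1 + 1 / ((n : ℝ) + 1)) z.2 - F z.1 z.2)) (fun n => ?_)
    (tendsto_pi_nhds.2 fun z => (hd z.2 z.1).tendsto_slope_zero.comp tendsto_step)
  exact ((hF.comp (by fun_prop : Measurable fun z : ℝ × A =>
    (z.1 + 1 / ((n : ℝ) + 1), z.2))).sub hF).const_smul (1 / ((n : ℝ) + 1))⁻¹

lemma integral_add_left_stdG (F : ℝ → ℝ) (m : ℝ) :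
    ∫ z, F (m + z) ∂stdG = ∫ y, F y * exp (y * m - m ^ 2 / 2) ∂stdG := by
  have shift : ∫ z, F (m + z) ∂stdG = ∫ y, F y ∂gaussianReal m 1 := by
    have := gaussianReal_map_const_add (μ := 0) (v := 1) m
    rw [zero_add] at this
    rw [← this, (measurableEmbedding_addLeft m).integral_map, stdG]
  have exp_shift (y : ℝ) : exp (-(y - m) ^ 2 / (2 * (1 : NNReal)))
      = exp (-(y - 0) ^ 2 / (2 * (1 : NNReal))) * exp (y * m - m ^ 2 / 2) := by
    rw [← exp_add]; congr 1; push_cast; ring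
  rw [shift, stdG, integral_gaussianReal_eq_integral_smul one_ne_zero,
    integral_gaussianReal_eq_integral_smul one_ne_zero]
  refine integral_congr_ae (.of_forall fun y => ?_)
  simp only [gaussianPDFReal_def, smul_eq_mul, exp_shift]
  ring

lemma integrable_exp_mul_abs_stdG (s : ℝ) : Integrable (fun y => exp (s * |y|)) stdG :=
  integrable_exp_mul_abs (integrable_exp_mul_gaussianReal s) (integrable_exp_mul_gaussianReal (-s))

lemma IsBoundedJet.integral {P : Measure A} [IsProbabilityMeasure P] {J : A → ℝ → ℝ × ℝ × ℝ}
    {D : ℝ} (hJ : ∀ α, IsBoundedJet (J α) D) (hm : ∀ x, Measurable fun α => J α x) :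
    IsBoundedJet (fun x => ∫ α, J α x ∂P) D := by
  obtain ⟨α₀⟩ := P.nonempty_of_neZero
  have integrable (x : ℝ) : Integrable (fun α => J α x) P :=
    .of_bound (hm x).aestronglyMeasurable D (.of_forall fun α => (hJ α).norm_le x)
  have integral_mid (x : ℝ) : (∫ α, J α x ∂P).2.1 = ∫ α, (J α x).2.1 ∂P := by
    rw [snd_integral (integrable x), fst_integral (integrable x).snd]
  have integral_last (x : ℝ) : (∫ α, J α x ∂P).2.2 = ∫ α, (J α x).2.2 ∂P := by
    rw [snd_integral (integrable x), snd_integral (integrable x).snd]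
  refine ⟨(hJ α₀).one_le, fun x => ?_, fun x => ?_, fun x => (convex_jetBox D).integral_mem
    (isCompact_jetBox D).isClosed (.of_forall fun α => (hJ α).mem x) (integrable x)⟩
  · simp only [fun x => fst_integral (integrable x), integral_mid]
    exact (hasDerivAt_integral_of_dominated_loc_of_deriv_le univ_mem
      (.of_forall fun x => (hm x).fst.aestronglyMeasurable) (integrable x).fst
      (hm x).snd.fst.aestronglyMeasurable (.of_forall fun α x _ =>
        (norm_fst_le _).trans ((norm_snd_le _).trans ((hJ α).norm_le x)))
      (integrable_const D) (.of_forall fun α x _ => (hJ α).hasDerivAt_fst x)).2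
  · simp only [integral_mid, integral_last]
    exact (hasDerivAt_integral_of_dominated_loc_of_deriv_le univ_mem
      (.of_forall fun x => (hm x).snd.fst.aestronglyMeasurable) (integrable x).snd.fst
      (hm x).snd.snd.aestronglyMeasurable (.of_forall fun α x _ =>
        (norm_snd_le _).trans ((norm_snd_le _).trans ((hJ α).norm_le x)))
      (integrable_const D) (.of_forall fun α x _ => (hJ α).hasDerivAt_snd x)).2

/-- Density of `N(m, 1)` with respect to `N(0, 1)`. -/
def tilt (y m : ℝ) : ℝ := exp (y * m - m ^ 2 / 2)

/-- Jet of `tilt y ∘ f` at a point where the jet of `f` is `z`. -/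
def tiltJet (y : ℝ) (z : ℝ × ℝ × ℝ) : ℝ × ℝ × ℝ :=
  (tilt y z.1, (y - z.1) * z.2.1 * tilt y z.1,
    ((y - z.1) * z.2.2 + ((y - z.1) ^ 2 - 1) * z.2.1 ^ 2) * tilt y z.1)

/-- The jets bounded, entry by entry, by `a`, `b` and `c`. -/
def linkBox (a b c : ℝ) : Set (ℝ × ℝ × ℝ) := Icc (-a) a ×ˢ Icc (-b) b ×ˢ Icc (-c) c

/-- Bound for the logarithm of the likelihood. -/
def logBound (a y : ℝ) : ℝ := a * |y| + a ^ 2 / 2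

/-- Bound for the first derivative of the likelihood, relative to the likelihood. -/
def scoreBound (a b y : ℝ) : ℝ := (|y| + a) * b

/-- Bound for the second derivative of the likelihood, relative to the likelihood. -/
def hessBound (a b c y : ℝ) : ℝ := (|y| + a) * c + ((|y| + a) ^ 2 + 1) * b ^ 2

/-- A weight dominating the likelihood, its derivatives, and the bounds above. -/
def weight (a b c y : ℝ) : ℝ := exp (4 * (|y| + a + b + c) + logBound a y)

variable {a b c y m : ℝ} {z : ℝ × ℝ × ℝ}

lemma tilt_pos (y m : ℝ) : 0 < tilt y m := exp_pos _

lemma hasDerivAt_tilt {f : ℝ → ℝ} {f' x : ℝ} (hf : HasDerivAt f f' x) (y : ℝ) :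
    HasDerivAt (fun x => tilt y (f x)) ((y - f x) * f' * tilt y (f x)) x := by
  refine ((hf.const_mul y).fun_sub ((hf.fun_pow 2).div_const 2)).exp.congr_deriv ?_
  rw [tilt]
  push_cast
  ring

@[fun_prop]
lemma measurable_logBound : Measurable (logBound a) := by unfold logBound; fun_prop

@[fun_prop]
lemma measurable_scoreBound : Measurable (scoreBound a b) := by unfold scoreBound; fun_prop

@[fun_prop]
lemma measurable_hessBound : Measurable (hessBound a b c) := by unfold hessBound; fun_prop

lemma measurable_weight : Measurable (weight a b c) := by unfold weight; fun_prop

lemma measurable_tiltJet : Measurable fun z : ℝ × ℝ × ℝ × ℝ => tiltJet z.1 z.2 := by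
  unfold tiltJet tilt; fun_prop

lemma logBound_nonneg (ha : 0 ≤ a) (y : ℝ) : 0 ≤ logBound a y := by unfold logBound; positivity

lemma scoreBound_nonneg (ha : 0 ≤ a) (hb : 0 ≤ b) (y : ℝ) : 0 ≤ scoreBound a b y := by
  unfold scoreBound; positivity

lemma hessBound_nonneg (ha : 0 ≤ a) (hc : 0 ≤ c) (y : ℝ) : 0 ≤ hessBound a b c y := by
  unfold hessBound; positivity

lemma integrable_weight_pow (n : ℕ) : Integrable (fun y => weight a b c y ^ n) stdG := by
  have factor (y : ℝ) : weight a b c y ^ n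
      = exp (n * (4 * (a + b + c) + a ^ 2 / 2)) * exp (n * (4 + a) * |y|) := by
    rw [weight, ← exp_nat_mul, ← exp_add, logBound]
    ring_nf
  simpa only [factor] using (integrable_exp_mul_abs_stdG _).const_mul _

lemma mul_exp_logBound_le_weight (y : ℝ) {k : ℝ} (hs : 0 ≤ |y| + a + b + c)
    (hk : k ≤ (1 + (|y| + a + b + c)) ^ 4) : k * exp (logBound a y) ≤ weight a b c y := by
  have : (1 + (|y| + a + b + c)) ^ 4 ≤ exp (4 * (|y| + a + b + c)) := by
    rw [show (4 : ℝ) = (4 : ℕ) by norm_num, exp_nat_mul, add_comm]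
    exact pow_le_pow_left₀ (by positivity) (add_one_le_exp _) 4
  rw [weight, exp_add]
  exact mul_le_mul_of_nonneg_right (hk.trans this) (exp_pos _).le

lemma le_weight_of_le_pow (ha : 0 ≤ a) (hb : 0 ≤ b) (hc : 0 ≤ c) (y : ℝ) {k : ℝ}
    (hk : k ≤ (1 + (|y| + a + b + c)) ^ 4) : k ≤ weight a b c y :=
  hk.trans ((le_mul_of_one_le_right (by positivity) (one_le_exp (logBound_nonneg ha y))).trans
    (mul_exp_logBound_le_weight y (by positivity) le_rfl))

lemma scoreBound_le_pow (ha : 0 ≤ a) (hb : 0 ≤ b) (hc : 0 ≤ c) (y : ℝ) :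
    scoreBound a b y ≤ (1 + (|y| + a + b + c)) ^ 4 := by
  have hy := abs_nonneg y
  set s := |y| + a + b + c
  have hs : 0 ≤ s := by positivity
  calc scoreBound a b y ≤ s * s := by unfold scoreBound; gcongr <;> linarith
    _ ≤ (1 + s) ^ 4 := by nlinarith [pow_nonneg hs 2, pow_nonneg hs 3, pow_nonneg hs 4]

lemma hessBound_le_pow (ha : 0 ≤ a) (hb : 0 ≤ b) (hc : 0 ≤ c) (y : ℝ) :
    hessBound a b c y ≤ (1 + (|y| + a + b + c)) ^ 4 := by
  have hy := abs_nonneg y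
  set s := |y| + a + b + c
  have hs : 0 ≤ s := by positivity
  calc hessBound a b c y ≤ s * s + (s ^ 2 + 1) * s ^ 2 := by
        unfold hessBound; gcongr <;> linarith
    _ ≤ (1 + s) ^ 4 := by nlinarith [pow_nonneg hs 2, pow_nonneg hs 3]

lemma logBound_le_pow (ha : 0 ≤ a) (hb : 0 ≤ b) (hc : 0 ≤ c) (y : ℝ) :
    logBound a y ≤ (1 + (|y| + a + b + c)) ^ 4 := by
  have hy := abs_nonneg y
  set s := |y| + a + b + c
  have hs : 0 ≤ s := by positivity
  calc logBound a y ≤ s * s + s ^ 2 / 2 := by unfold logBound; gcongr <;> linarith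
    _ ≤ (1 + s) ^ 4 := by nlinarith [pow_nonneg hs 2, pow_nonneg hs 3, pow_nonneg hs 4]

lemma nonneg_of_mem_linkBox (hz : z ∈ linkBox a b c) : 0 ≤ a ∧ 0 ≤ b ∧ 0 ≤ c :=
  ⟨by linarith [hz.1.1, hz.1.2], by linarith [hz.2.1.1, hz.2.1.2],
    by linarith [hz.2.2.1, hz.2.2.2]⟩

lemma tilt_mem_Icc_exp (hm : |m| ≤ a) (y : ℝ) :
    tilt y m ∈ Icc (exp (-logBound a y)) (exp (logBound a y)) := by
  have abs_mul_le : |y * m| ≤ a * |y| := by rw [abs_mul, mul_comm]; gcongr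
  have sq_le : m ^ 2 ≤ a ^ 2 := sq_le_sq' (abs_le.1 hm).1 (abs_le.1 hm).2
  rw [abs_le] at abs_mul_le
  constructor <;> rw [tilt, exp_le_exp, logBound] <;> nlinarith [sq_nonneg m, sq_nonneg a]

lemma abs_sub_fst_le (hz : z ∈ linkBox a b c) (y : ℝ) : |y - z.1| ≤ |y| + a :=
  (abs_sub _ _).trans (by linarith [abs_le.2 hz.1])

lemma abs_tiltJet_deriv_le (hz : z ∈ linkBox a b c) (y : ℝ) :
    |(tiltJet y z).2.1| ≤ scoreBound a b y * (tiltJet y z).1 := by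
  have ha := (nonneg_of_mem_linkBox hz).1
  rw [tiltJet, abs_mul, abs_mul, abs_of_pos (tilt_pos _ _)]
  exact mul_le_mul_of_nonneg_right (mul_le_mul (abs_sub_fst_le hz y) (abs_le.2 hz.2.1)
    (abs_nonneg _) (by positivity)) (tilt_pos _ _).le

lemma abs_tiltJet_deriv_two_le (hz : z ∈ linkBox a b c) (y : ℝ) :
    |(tiltJet y z).2.2| ≤ hessBound a b c y * (tiltJet y z).1 := by
  have ha := (nonneg_of_mem_linkBox hz).1
  have shift := abs_sub_fst_le hz y
  have quadratic : |(y - z.1) ^ 2 - 1| ≤ (|y| + a) ^ 2 + 1 := by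
    refine (abs_sub _ _).trans ?_
    rw [abs_pow, abs_one]
    gcongr
  rw [tiltJet, abs_mul, abs_of_pos (tilt_pos _ _)]
  refine mul_le_mul_of_nonneg_right ((abs_add_le _ _).trans ?_) (tilt_pos _ _).le
  rw [abs_mul, abs_mul, abs_pow, hessBound]
  gcongr
  exacts [abs_le.2 hz.2.2, abs_le.2 hz.2.1]

lemma tiltJet_mem_jetBox (hz : z ∈ linkBox a b c) (y : ℝ) :
    tiltJet y z ∈ jetBox (weight a b c y) := by
  obtain ⟨ha, hb, hc⟩ := nonneg_of_mem_linkBox hz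
  have hs : 0 ≤ |y| + a + b + c := by positivity
  obtain ⟨lower, upper⟩ := tilt_mem_Icc_exp (abs_le.2 hz.1) y
  have exp_le : exp (logBound a y) ≤ weight a b c y := by
    simpa using mul_exp_logBound_le_weight y hs (one_le_pow₀ (le_add_of_nonneg_right hs))
  refine ⟨⟨?_, upper.trans exp_le⟩, abs_le.1 ?_, abs_le.1 ?_⟩
  · rw [exp_neg] at lower
    exact (inv_anti₀ (exp_pos _) exp_le).trans lower
  · exact (abs_tiltJet_deriv_le hz y).trans ((mul_le_mul_of_nonneg_left upper
      (scoreBound_nonneg ha hb y)).trans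
      (mul_exp_logBound_le_weight y hs (scoreBound_le_pow ha hb hc y)))
  · exact (abs_tiltJet_deriv_two_le hz y).trans ((mul_le_mul_of_nonneg_left upper
      (hessBound_nonneg ha hc y)).trans
      (mul_exp_logBound_le_weight y hs (hessBound_le_pow ha hb hc y)))

/-- `g · α` collects a function and its first two derivatives, bounded by `a`, `b` and `c`,
for every value of the parameter `α`. -/
structure IsBoundedLink (g : ℝ → A → ℝ × ℝ × ℝ) (a b c : ℝ) : Prop where
  measurable : Measurable fun z : ℝ × A => g z.1 z.2
  hasDerivAt_fst : ∀ α x, HasDerivAt (fun x => (g x α).1) (g x α).2.1 x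
  hasDerivAt_snd : ∀ α x, HasDerivAt (fun x => (g x α).2.1) (g x α).2.2 x
  mem : ∀ x α, g x α ∈ linkBox a b c

/-- Jet in `x` of the density at `y`, with respect to `N(0, 1)`, of the law of `(g x α).1 + Z`,
where `α` has law `P` and `Z` is an independent standard Gaussian variable. -/
def likelihoodJet (P : Measure A) (g : ℝ → A → ℝ × ℝ × ℝ) (y x : ℝ) : ℝ × ℝ × ℝ :=
  ∫ α, tiltJet y (g x α) ∂P

namespace IsBoundedLink

variable {g : ℝ → A → ℝ × ℝ × ℝ} {P : Measure A} [IsProbabilityMeasure P]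

lemma isBoundedJet_tiltJet (h : IsBoundedLink g a b c) (y : ℝ) (α : A) :
    IsBoundedJet (fun x => tiltJet y (g x α)) (weight a b c y) where
  one_le := by
    obtain ⟨ha, hb, hc⟩ := nonneg_of_mem_linkBox (h.mem 0 α)
    exact le_weight_of_le_pow ha hb hc y (one_le_pow₀ (le_add_of_nonneg_right (by positivity)))
  hasDerivAt_fst x := hasDerivAt_tilt (h.hasDerivAt_fst α x) y
  hasDerivAt_snd x := by
    refine ((((h.hasDerivAt_fst α x).const_sub y).fun_mul (h.hasDerivAt_snd α x)).fun_mul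
      (hasDerivAt_tilt (h.hasDerivAt_fst α x) y)).congr_deriv ?_
    rw [tiltJet]
    ring
  mem x := tiltJet_mem_jetBox (h.mem x α) y

lemma measurable_tiltJet (h : IsBoundedLink g a b c) :
    Measurable fun z : (ℝ × ℝ) × A => tiltJet z.1.1 (g z.1.2 z.2) :=
  GLM.measurable_tiltJet.comp ((by fun_prop : Measurable fun z : (ℝ × ℝ) × A => z.1.1).prodMk
    (h.measurable.comp (by fun_prop : Measurable fun z : (ℝ × ℝ) × A => (z.1.2, z.2))))

lemma isJetFamily (h : IsBoundedLink g a b c) :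
    IsJetFamily stdG (likelihoodJet P g) (weight a b c) where
  measurable_weight := measurable_weight
  integrable_pow := integrable_weight_pow
  measurable := h.measurable_tiltJet.stronglyMeasurable.integral_prod_right'.measurable
  isBoundedJet y := .integral (h.isBoundedJet_tiltJet y) fun x =>
    h.measurable_tiltJet.comp (by fun_prop : Measurable fun α : A => ((y, x), α))

lemma integrable_tiltJet (h : IsBoundedLink g a b c) (y x : ℝ) :
    Integrable (fun α => tiltJet y (g x α)) P :=
  .of_bound (h.measurable_tiltJet.comp (by fun_prop :
    Measurable fun α : A => ((y, x), α))).aestronglyMeasurable (weight a b c y)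
    (.of_forall fun α => (h.isBoundedJet_tiltJet y α).norm_le x)

lemma likelihoodJet_fst (h : IsBoundedLink g a b c) (y x : ℝ) :
    (likelihoodJet P g y x).1 = ∫ α, tilt y (g x α).1 ∂P :=
  fst_integral (h.integrable_tiltJet y x)

lemma likelihoodJet_fst_mem_Icc_exp (h : IsBoundedLink g a b c) (y x : ℝ) :
    (likelihoodJet P g y x).1 ∈ Icc (exp (-logBound a y)) (exp (logBound a y)) := by
  rw [h.likelihoodJet_fst]
  exact (convex_Icc _ _).integral_mem isClosed_Icc
    (.of_forall fun α => tilt_mem_Icc_exp (abs_le.2 (h.mem x α).1) y) (h.integrable_tiltJet y x).fst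

lemma abs_likelihoodJet_deriv_le (h : IsBoundedLink g a b c) (y x : ℝ) :
    |(likelihoodJet P g y x).2.1| ≤ scoreBound a b y * (likelihoodJet P g y x).1 :=
  abs_integral_le_mul_integral_fst (h.integrable_tiltJet y x)
    ((ContinuousLinearMap.fst ℝ ℝ ℝ).comp (ContinuousLinearMap.snd ℝ ℝ (ℝ × ℝ)))
    fun α => abs_tiltJet_deriv_le (h.mem x α) y

lemma abs_likelihoodJet_deriv_two_le (h : IsBoundedLink g a b c) (y x : ℝ) :
    |(likelihoodJet P g y x).2.2| ≤ hessBound a b c y * (likelihoodJet P g y x).1 :=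
  abs_integral_le_mul_integral_fst (h.integrable_tiltJet y x)
    ((ContinuousLinearMap.snd ℝ ℝ ℝ).comp (ContinuousLinearMap.snd ℝ ℝ (ℝ × ℝ)))
    fun α => abs_tiltJet_deriv_two_le (h.mem x α) y

lemma integral_mul_likelihoodJet_fst (h : IsBoundedLink g a b c) {K : ℝ → ℝ} {B : ℝ} {n : ℕ}
    (hK : Measurable K) (hKD : ∀ y, |K y| ≤ B * weight a b c y ^ n) (x : ℝ) :
    ∫ y, K y * (likelihoodJet P g y x).1 ∂stdG = ∫ α, ∫ z, K ((g x α).1 + z) ∂stdG ∂P := by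
  have integrable : Integrable (fun z : ℝ × A => K z.1 * tilt z.1 (g x z.2).1) (stdG.prod P) :=
    (((integrable_weight_pow (n + 1)).const_mul B).comp_fst P).mono'
      ((hK.comp measurable_fst).mul (h.measurable_tiltJet.comp (by fun_prop :
        Measurable fun z : ℝ × A => ((z.1, x), z.2))).fst).aestronglyMeasurable
      (.of_forall fun z => norm_mul_le_mul_pow_succ (p := Prod.fst) (hKD z.1) norm_fst_le
        ((h.isBoundedJet_tiltJet z.1 z.2).norm_le x))
  simp only [h.likelihoodJet_fst, ← integral_const_mul]
  rw [integral_integral_swap integrable]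
  exact integral_congr_ae (.of_forall fun α => (integral_add_left_stdG K (g x α).1).symm)

end IsBoundedLink
end Likelihood

section Channel

open Set

variable {a b c m : ℝ}

lemma integrable_cubic (k₀ k₁ k₂ k₃ : ℝ) :
    Integrable (fun z => k₀ + k₁ * |z| + k₂ * z ^ 2 + k₃ * |z| ^ 3) stdG :=
  (((integrable_const _).add (integrable_abs_stdG.const_mul k₁)).add
    ((integrable_pow_stdG 2).const_mul k₂)).add ((integrable_abs_pow_stdG 3).const_mul k₃)

lemma integral_cubic_le {k₁ k₃ : ℝ} (h₁ : 0 ≤ k₁) (h₃ : 0 ≤ k₃) (k₀ k₂ : ℝ) :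
    ∫ z, (k₀ + k₁ * |z| + k₂ * z ^ 2 + k₃ * |z| ^ 3) ∂stdG ≤ k₀ + k₁ + k₂ + 2 * k₃ := by
  have linear : Integrable (fun z => k₀ + k₁ * |z|) stdG := by
    simpa using integrable_cubic k₀ k₁ 0 0
  have quadratic : Integrable (fun z => k₀ + k₁ * |z| + k₂ * z ^ 2) stdG := by
    simpa using integrable_cubic k₀ k₁ k₂ 0
  rw [integral_add quadratic ((integrable_abs_pow_stdG 3).const_mul k₃),
    integral_add linear ((integrable_pow_stdG 2).const_mul k₂),
    integral_add (integrable_const k₀) (integrable_abs_stdG.const_mul k₁),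
    integral_const_mul, integral_const_mul, integral_const_mul, integral_sq_stdG,
    integral_const, probReal_univ, one_smul]
  linarith [mul_le_mul_of_nonneg_left integral_abs_stdG_le h₁,
    mul_le_mul_of_nonneg_left integral_abs_pow_three_stdG_le h₃]

lemma integral_le_of_le_cubic {F : ℝ → ℝ} {k₀ k₁ k₂ k₃ : ℝ} (hF : ∀ z, 0 ≤ F z)
    (h : ∀ z, F z ≤ k₀ + k₁ * |z| + k₂ * |z| ^ 2 + k₃ * |z| ^ 3) (h₁ : 0 ≤ k₁) (h₃ : 0 ≤ k₃) :
    ∫ z, F z ∂stdG ≤ k₀ + k₁ + k₂ + 2 * k₃ :=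
  (integral_mono_of_nonneg (.of_forall hF) (integrable_cubic k₀ k₁ k₂ k₃)
    (.of_forall fun z => by simpa only [sq_abs] using h z)).trans (integral_cubic_le h₁ h₃ k₀ k₂)

lemma integral_scoreBound_sq_le (hm : |m| ≤ a) (b : ℝ) :
    ∫ z, scoreBound a b (m + z) ^ 2 ∂stdG ≤ b ^ 2 * (2 + 8 * a ^ 2) := by
  have ha : 0 ≤ a := (abs_nonneg m).trans hm
  have cubic_bound (z : ℝ) : scoreBound a b (m + z) ^ 2
      ≤ 4 * a ^ 2 * b ^ 2 + 4 * a * b ^ 2 * |z| + b ^ 2 * |z| ^ 2 + 0 * |z| ^ 3 :=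
    calc scoreBound a b (m + z) ^ 2 = (|m + z| + a) ^ 2 * b ^ 2 := mul_pow _ _ 2
      _ ≤ (a + |z| + a) ^ 2 * b ^ 2 := by
          gcongr; exact (abs_add_le m z).trans (by gcongr)
      _ = _ := by ring
  refine (integral_le_of_le_cubic (fun z => sq_nonneg _) cubic_bound (by positivity)
    le_rfl).trans ?_
  nlinarith [mul_nonneg (sq_nonneg b) (sq_nonneg (2 * a - 1))]

/-- Bound for the mean of `logBound * hessBound` under the output law. -/
def curvatureConst (a b c : ℝ) : ℝ :=
  c * (a + 7 / 2 * a ^ 2 + 3 * a ^ 3) + b ^ 2 * (3 * a + 7 * a ^ 2 + 10 * a ^ 3 + 6 * a ^ 4)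

lemma integral_logBound_mul_hessBound_le (hm : |m| ≤ a) (hc : 0 ≤ c) (b : ℝ) :
    ∫ z, logBound a (m + z) * hessBound a b c (m + z) ∂stdG ≤ curvatureConst a b c := by
  have ha : 0 ≤ a := (abs_nonneg m).trans hm
  have cubic_bound (z : ℝ) : logBound a (m + z) * hessBound a b c (m + z)
      ≤ 3 * a ^ 3 * c + (6 * a ^ 4 + 3 / 2 * a ^ 2) * b ^ 2
        + (7 / 2 * a ^ 2 * c + (10 * a ^ 3 + a) * b ^ 2) * |z|
        + (a * c + 11 / 2 * a ^ 2 * b ^ 2) * |z| ^ 2 + a * b ^ 2 * |z| ^ 3 := by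
    have shift : |m + z| ≤ a + |z| := (abs_add_le m z).trans (by gcongr)
    calc logBound a (m + z) * hessBound a b c (m + z)
        ≤ (a * (a + |z|) + a ^ 2 / 2)
          * ((a + |z| + a) * c + ((a + |z| + a) ^ 2 + 1) * b ^ 2) := by
          unfold logBound hessBound; gcongr
      _ = _ := by ring
  refine (integral_le_of_le_cubic (fun z => mul_nonneg (logBound_nonneg ha _)
    (hessBound_nonneg ha hc _)) cubic_bound (by positivity) (by positivity)).trans_eq ?_
  rw [curvatureConst]
  ring

lemma curvatureConst_le (ha : 0 ≤ a) (hc : 0 ≤ c) (b : ℝ) :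
    b ^ 2 * (2 + 8 * a ^ 2) / 2 + curvatureConst a b c
      ≤ b ^ 2 * (128 * a ^ 4 + 12 * a ^ 2 + 27) + c * (16 * a ^ 3 + 4 * √(2 / π)) := by
  have sqrt_ge : (7 / 10 : ℝ) ≤ √(2 / π) := by
    refine le_sqrt_of_sq_le ?_
    rw [le_div_iff₀ pi_pos]
    linarith [pi_lt_four]
  have cubic : a + 7 / 2 * a ^ 2 + 3 * a ^ 3 ≤ 16 * a ^ 3 + 4 * √(2 / π) := by
    nlinarith [mul_nonneg ha (sq_nonneg (2 * a - 1)), sq_nonneg (2 * a - 1)]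
  have quartic : 1 + 4 * a ^ 2 + (3 * a + 7 * a ^ 2 + 10 * a ^ 3 + 6 * a ^ 4)
      ≤ 128 * a ^ 4 + 12 * a ^ 2 + 27 := by
    nlinarith [sq_nonneg (a - 1), sq_nonneg (a ^ 2 - a), sq_nonneg (a ^ 2), sq_nonneg (a ^ 2 - 1)]
  rw [curvatureConst]
  nlinarith [mul_le_mul_of_nonneg_left cubic hc, mul_le_mul_of_nonneg_left quartic (sq_nonneg b)]

namespace IsBoundedLink

variable {A : Type*} [MeasurableSpace A] {g : ℝ → A → ℝ × ℝ × ℝ} {P : Measure A}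
  [IsProbabilityMeasure P]

lemma integral_mul_likelihoodJet_fst_le (h : IsBoundedLink g a b c) {K : ℝ → ℝ} {B C : ℝ} {n : ℕ}
    (hK : Measurable K) (hK₀ : ∀ y, 0 ≤ K y) (hKD : ∀ y, K y ≤ B * weight a b c y ^ n)
    (hC : ∀ m, |m| ≤ a → ∫ z, K (m + z) ∂stdG ≤ C) (x : ℝ) :
    ∫ y, K y * (likelihoodJet P g y x).1 ∂stdG ≤ C := by
  rw [h.integral_mul_likelihoodJet_fst hK (fun y => (abs_of_nonneg (hK₀ y)).trans_le (hKD y))]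
  refine (integral_mono_of_nonneg (.of_forall fun α => integral_nonneg fun z => hK₀ _)
    (integrable_const C) (.of_forall fun α => hC _ (abs_le.2 (h.mem x α).1))).trans_eq ?_
  rw [integral_const, probReal_univ, one_smul]

lemma isRegularModel (h : IsBoundedLink g a b c) :
    IsRegularModel stdG (likelihoodJet P g) (weight a b c) (scoreBound a b) (hessBound a b c)
      (logBound a) (b ^ 2 * (2 + 8 * a ^ 2)) (curvatureConst a b c) := by
  obtain ⟨α₀⟩ := P.nonempty_of_neZero
  obtain ⟨ha, hb, hc⟩ := nonneg_of_mem_linkBox (h.mem 0 α₀)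
  have score_mem (y : ℝ) : scoreBound a b y ∈ Icc 0 (weight a b c y) :=
    ⟨scoreBound_nonneg ha hb y, le_weight_of_le_pow ha hb hc y (scoreBound_le_pow ha hb hc y)⟩
  have hess_mem (y : ℝ) : hessBound a b c y ∈ Icc 0 (weight a b c y) :=
    ⟨hessBound_nonneg ha hc y, le_weight_of_le_pow ha hb hc y (hessBound_le_pow ha hb hc y)⟩
  have log_mem (y : ℝ) : logBound a y ∈ Icc 0 (weight a b c y) :=
    ⟨logBound_nonneg ha y, le_weight_of_le_pow ha hb hc y (logBound_le_pow ha hb hc y)⟩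
  refine
    { h.isJetFamily with
      measurable_score := measurable_scoreBound
      measurable_hess := measurable_hessBound
      measurable_log := measurable_logBound
      score_mem := score_mem
      hess_mem := hess_mem
      log_mem := log_mem
      mem_Icc_exp := h.likelihoodJet_fst_mem_Icc_exp
      abs_deriv_le := h.abs_likelihoodJet_deriv_le
      abs_deriv_two_le := h.abs_likelihoodJet_deriv_two_le
      integral_eq_one := fun x => ?_
      fisher_le := h.integral_mul_likelihoodJet_fst_le (K := fun y => scoreBound a b y ^ 2) (B := 1)
        (n := 2) (by fun_prop) (fun y => sq_nonneg _) (fun y => ?_)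
        fun m hm => integral_scoreBound_sq_le hm b
      curvature_le := h.integral_mul_likelihoodJet_fst_le
        (K := fun y => logBound a y * hessBound a b c y) (B := 1) (n := 2) (by fun_prop)
        (fun y => mul_nonneg (log_mem y).1 (hess_mem y).1) (fun y => ?_)
        fun m hm => integral_logBound_mul_hessBound_le hm hc b }
  · simpa using h.integral_mul_likelihoodJet_fst (P := P) (K := fun _ => 1) (B := 1) (n := 0)
      measurable_const (fun y => by simp) x
  · rw [one_mul]
    exact pow_le_pow_left₀ (score_mem y).1 (score_mem y).2 2
  · rw [one_mul, pow_two]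
    exact mul_le_mul (log_mem y).2 (hess_mem y).2 (hess_mem y).1 ((log_mem y).1.trans (log_mem y).2)

end IsBoundedLink
end Channel

section Information

open Set

namespace IsBoundedLink

variable {A : Type*} [MeasurableSpace A] {g : ℝ → A → ℝ × ℝ × ℝ} {a b c q t B : ℝ}
  {P : Measure A} [IsProbabilityMeasure P]

lemma integral_output_add_log (h : IsBoundedLink g a b c) {κ : ℝ → ℝ} (hκ : Measurable κ)
    (hκD : ∀ y, |κ y| ≤ B * weight a b c y ^ 1) (hq : 0 ≤ q) (ht : 0 ≤ t) :
    ∫ v, ∫ w, ∫ α, ∫ z, (κ ((g (√q * v + √t * w) α).1 + z)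
        + log (heat t (likelihoodJet P g ((g (√q * v + √t * w) α).1 + z)) (√q * v)).1)
        ∂stdG ∂P ∂stdG ∂stdG
      = ∫ v, ∫ y, κ y * (likelihoodJet P g y (√(q + t) * v)).1 ∂stdG ∂stdG
        + energy stdG (likelihoodJet P g) entropyDensity q t := by
  have model := h.isRegularModel (P := P)
  have bound (u y : ℝ) : |κ y + log (heat t (likelihoodJet P g y) u).1|
      ≤ (B + 1) * weight a b c y ^ 1 := by
    rw [add_mul]
    exact (abs_add_le _ _).trans (add_le_add (hκD y)
      (model.abs_le_of_abs_le_log (model.abs_log_heat_le t u) y))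
  have average_output (u : ℝ) : ∫ w, ∫ α, ∫ z, (κ ((g (u + √t * w) α).1 + z)
        + log (heat t (likelihoodJet P g ((g (u + √t * w) α).1 + z)) u).1) ∂stdG ∂P ∂stdG
      = ∫ y, (κ y + log (heat t (likelihoodJet P g y) u).1)
        * (heat t (likelihoodJet P g y) u).1 ∂stdG := by
    have hK : Measurable fun y => κ y + log (heat t (likelihoodJet P g y) u).1 :=
      hκ.add (model.measurable_log_heat t u)
    rw [model.integral_mul_heat_fst hK (bound u), heat]
    exact integral_congr_ae (.of_forall fun w =>
      (h.integral_mul_likelihoodJet_fst hK (bound u) (u + √t * w)).symm)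
  simp only [average_output]
  exact model.integral_integral_add_log_mul hκ hκD hq ht

end IsBoundedLink

variable {kA : ℕ} {PA : Measure (Fin kA → ℝ)} {φ φ' φ'' : ℝ → (Fin kA → ℝ) → ℝ}
  {Δ a b c q ρ : ℝ}

/-- Jet of the activation `φ / √Δ`, which normalises the noise to unit variance. -/
def normalizedLink (Δ : ℝ) (φ φ' φ'' : ℝ → (Fin kA → ℝ) → ℝ) (x : ℝ) (α : Fin kA → ℝ) :
    ℝ × ℝ × ℝ :=
  (φ x α / √Δ, φ' x α / √Δ, φ'' x α / √Δ)

lemma Pout_sqrt_mul (hΔ : 0 < Δ) [IsProbabilityMeasure PA]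
    (h : IsBoundedLink (normalizedLink Δ φ φ' φ'') a b c) (y x : ℝ) :
    Pout Δ PA φ (√Δ * y) x = (√(2 * π * Δ))⁻¹ *
      (exp (-(y ^ 2 / 2)) * (likelihoodJet PA (normalizedLink Δ φ φ' φ'') y x).1) := by
  rw [Pout, h.likelihoodJet_fst, ← integral_const_mul (exp _)]
  congr 1
  refine integral_congr_ae (.of_forall fun α => ?_)
  simp only [tilt, normalizedLink, ← exp_add]
  congr 1
  have complete_square : -(√Δ * y - φ x α) ^ 2 / (2 * √Δ ^ 2)
      = -(y ^ 2 / 2) + (y * (φ x α / √Δ) - (φ x α / √Δ) ^ 2 / 2) := by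
    field_simp
    ring
  rwa [sq_sqrt hΔ.le] at complete_square

lemma log_integral_Pout (hΔ : 0 < Δ) [IsProbabilityMeasure PA]
    (h : IsBoundedLink (normalizedLink Δ φ φ' φ'') a b c) (y t u : ℝ) :
    log (∫ w, Pout Δ PA φ (√Δ * y) (u + √t * w) ∂stdG) = log (√(2 * π * Δ))⁻¹ - y ^ 2 / 2
      + log (heat t (likelihoodJet PA (normalizedLink Δ φ φ' φ'') y) u).1 := by
  have jet := (h.isJetFamily (P := PA)).isBoundedJet y
  have heat_pos := jet.heat_fst_pos t u
  simp only [Pout_sqrt_mul hΔ h]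
  rw [integral_const_mul, integral_const_mul,
    show ∫ w, (likelihoodJet PA (normalizedLink Δ φ φ' φ'') y (u + √t * w)).1 ∂stdG
      = (heat t (likelihoodJet PA (normalizedLink Δ φ φ' φ'') y) u).1 from jet.heat_fst t u,
    log_mul (by positivity) (by positivity), log_mul (exp_pos _).ne' heat_pos.ne', log_exp]
  ring

lemma abs_sub_half_sq_le_weight (ha : 0 ≤ a) (hb : 0 ≤ b) (hc : 0 ≤ c) (l y : ℝ) :
    |l - y ^ 2 / 2| ≤ (1 + |l|) * weight a b c y := by
  have one_add_sq_le : 1 + y ^ 2 ≤ weight a b c y := by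
    refine le_weight_of_le_pow ha hb hc y ?_
    have hy := abs_nonneg y
    calc 1 + y ^ 2 ≤ (1 + |y|) ^ 2 := by rw [← sq_abs y]; nlinarith
      _ ≤ (1 + |y|) ^ 4 := pow_le_pow_right₀ (by linarith) (by norm_num)
      _ ≤ (1 + (|y| + a + b + c)) ^ 4 := by gcongr; linarith
  calc |l - y ^ 2 / 2| ≤ |l| + y ^ 2 / 2 := (abs_sub _ _).trans_eq (by
        rw [abs_of_nonneg (by positivity : 0 ≤ y ^ 2 / 2)])
    _ ≤ (1 + |l|) * (1 + y ^ 2) := by nlinarith [abs_nonneg l, sq_nonneg y]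
    _ ≤ (1 + |l|) * weight a b c y := by gcongr

lemma IPout_eq_energy_sub (hΔ : 0 < Δ) [IsProbabilityMeasure PA]
    (h : IsBoundedLink (normalizedLink Δ φ φ' φ'') a b c) (hq : 0 ≤ q) (hqρ : q ≤ ρ) :
    IPout Δ PA φ q ρ
      = energy stdG (likelihoodJet PA (normalizedLink Δ φ φ' φ'')) entropyDensity ρ 0
        - energy stdG (likelihoodJet PA (normalizedLink Δ φ φ' φ'')) entropyDensity q (ρ - q) := by
  obtain ⟨ha, hb, hc⟩ := nonneg_of_mem_linkBox (h.mem 0 0)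
  have output {q t : ℝ} (hq : 0 ≤ q) (ht : 0 ≤ t) := h.integral_output_add_log (P := PA)
    (κ := fun y => log (√(2 * π * Δ))⁻¹ - y ^ 2 / 2) (by fun_prop)
    (fun y => by simpa using abs_sub_half_sq_le_weight ha hb hc (log (√(2 * π * Δ))⁻¹) y) hq ht
  have scale (x : ℝ) (α : Fin kA → ℝ) (z : ℝ) :
      √Δ * ((normalizedLink Δ φ φ' φ'' x α).1 + z) = φ x α + √Δ * z := by
    rw [normalizedLink]; field_simp
  simp only [← log_integral_Pout hΔ h, scale] at output
  have output_final := output (hq.trans hqρ) le_rfl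
  have output_initial := output hq (sub_nonneg.2 hqρ)
  simp only [sqrt_zero, zero_mul, add_zero, integral_const, probReal_univ, one_smul] at output_final
  rw [add_sub_cancel] at output_initial
  rw [IPout, output_final, output_initial, add_sub_add_left_eq_sub]

lemma abs_le_supNorm {f : ℝ → (Fin kA → ℝ) → ℝ} (hf : ∃ B, ∀ x α, |f x α| ≤ B) (x : ℝ)
    (α : Fin kA → ℝ) : |f x α| ≤ supNorm f := by
  obtain ⟨B, hB⟩ := hf
  exact le_csSup ⟨B, by rintro _ ⟨p, rfl⟩; exact hB _ _⟩ ⟨(x, α), rfl⟩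

lemma isBoundedLink_normalizedLink (Δ : ℝ)
    (hm : Measurable fun p : ℝ × (Fin kA → ℝ) => φ p.1 p.2)
    (hd : ∀ α x, HasDerivAt (fun x => φ x α) (φ' x α) x)
    (hd' : ∀ α x, HasDerivAt (fun x => φ' x α) (φ'' x α) x)
    (hφ : ∃ B, ∀ x α, |φ x α| ≤ B) (hφ' : ∃ B, ∀ x α, |φ' x α| ≤ B)
    (hφ'' : ∃ B, ∀ x α, |φ'' x α| ≤ B) :
    IsBoundedLink (normalizedLink Δ φ φ' φ'') (supNorm φ / √Δ) (supNorm φ' / √Δ)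
      (supNorm φ'' / √Δ) := by
  have mem_Icc {f : ℝ → (Fin kA → ℝ) → ℝ} (hf : ∃ B, ∀ x α, |f x α| ≤ B) (x : ℝ)
      (α : Fin kA → ℝ) : f x α / √Δ ∈ Icc (-(supNorm f / √Δ)) (supNorm f / √Δ) := by
    rw [mem_Icc, ← abs_le, abs_div, abs_of_nonneg (sqrt_nonneg Δ)]
    exact div_le_div_of_nonneg_right (abs_le_supNorm hf x α) (sqrt_nonneg Δ)
  have hm' := measurable_of_hasDerivAt hm hd
  exact
    { measurable := (hm.div_const _).prodMk
        ((hm'.div_const _).prodMk ((measurable_of_hasDerivAt hm' hd').div_const _))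
      hasDerivAt_fst := fun α x => (hd α x).div_const _
      hasDerivAt_snd := fun α x => (hd' α x).div_const _
      mem := fun x α => ⟨mem_Icc hφ x α, mem_Icc hφ' x α, mem_Icc hφ'' x α⟩ }

section BoundedLink

variable [IsProbabilityMeasure PA]

lemma contDiffOn_IPout (hΔ : 0 < Δ) (h : IsBoundedLink (normalizedLink Δ φ φ' φ'') a b c)
    (hρ : 0 < ρ) : ContDiffOn ℝ 2 (fun q => IPout Δ PA φ q ρ) (Icc 0 ρ) :=
  (contDiffOn_const.sub (h.isJetFamily.contDiffOn_negEntropy hρ)).congr fun _ hq =>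
    IPout_eq_energy_sub hΔ h hq.1 hq.2

lemma concaveOn_IPout (hΔ : 0 < Δ) (h : IsBoundedLink (normalizedLink Δ φ φ' φ'') a b c)
    (ρ : ℝ) : ConcaveOn ℝ (Icc 0 ρ) (fun q => IPout Δ PA φ q ρ) :=
  ((concaveOn_const _ (convex_Icc 0 ρ)).sub (h.isJetFamily.convexOn_negEntropy ρ)).congr
    fun _ hq => (IPout_eq_energy_sub hΔ h hq.1 hq.2).symm

lemma antitoneOn_IPout (hΔ : 0 < Δ) (h : IsBoundedLink (normalizedLink Δ φ φ' φ'') a b c)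
    (ρ : ℝ) : AntitoneOn (fun q => IPout Δ PA φ q ρ) (Icc 0 ρ) := by
  intro x hx y hy hxy
  simp only [IPout_eq_energy_sub hΔ h hx.1 hx.2, IPout_eq_energy_sub hΔ h hy.1 hy.2]
  exact sub_le_sub_left (h.isJetFamily.monotoneOn_negEntropy ρ hx hy hxy) _

lemma lipschitzOnWith_IPout_left (hΔ : 0 < Δ)
    (h : IsBoundedLink (normalizedLink Δ φ φ' φ'') a b c) (ρ : ℝ) :
    LipschitzOnWith (toNNReal ((4 * a ^ 2 + 1) * b ^ 2)) (fun q => IPout Δ PA φ q ρ)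
      (Icc 0 ρ) := by
  refine .of_dist_le_mul fun x hx y hy => ?_
  rw [coe_toNNReal _ (by positivity), dist_eq, dist_eq, IPout_eq_energy_sub hΔ h hx.1 hx.2,
    IPout_eq_energy_sub hΔ h hy.1 hy.2, sub_sub_sub_cancel_left, abs_sub_comm]
  exact (h.isRegularModel.abs_negEntropy_sub_le hx hy).trans_eq (by ring)

lemma lipschitzOnWith_IPout_right (hΔ : 0 < Δ)
    (h : IsBoundedLink (normalizedLink Δ φ φ' φ'') a b c) (hq : 0 ≤ q) :
    LipschitzOnWith (toNNReal (b ^ 2 * (128 * a ^ 4 + 12 * a ^ 2 + 27)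
      + c * (16 * a ^ 3 + 4 * √(2 / π)))) (fun ρ => IPout Δ PA φ q ρ) (Ici q) := by
  obtain ⟨ha, _, hc⟩ := nonneg_of_mem_linkBox (h.mem 0 0)
  refine .of_dist_le_mul fun x hx y hy => ?_
  rw [coe_toNNReal _ (by positivity)]
  wlog hxy : x ≤ y generalizing x y
  · rw [dist_comm, dist_comm x]
    exact this y hy x hx (le_of_not_ge hxy)
  rw [dist_comm, dist_comm x, dist_eq, dist_eq, IPout_eq_energy_sub hΔ h hq hx,
    IPout_eq_energy_sub hΔ h hq hy, abs_of_nonneg (sub_nonneg.2 hxy)]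
  exact (h.isRegularModel.abs_information_sub_le hq hx hxy).trans
    (mul_le_mul_of_nonneg_right (curvatureConst_le ha hc b) (sub_nonneg.2 hxy))

end BoundedLink
end Information

/-- Lemma 5 of the paper: regularity and Lipschitz properties of
q ↦ I_{P_out}(q, ρ) and ρ ↦ I_{P_out}(q, ρ). -/
theorem IPout_properties
    (Δ : ℝ) (hΔ : 0 < Δ)
    (kA : ℕ) (PA : Measure (Fin kA → ℝ)) [IsProbabilityMeasure PA]
    (φ φ' φ'' : ℝ → (Fin kA → ℝ) → ℝ)
    -- (H2)
    (hφmeas : Measurable fun p : ℝ × (Fin kA → ℝ) => φ p.1 p.2)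
    (hφbd : ∃ B, ∀ x a, |φ x a| ≤ B)
    (hd1 : ∀ a x, HasDerivAt (fun u => φ u a) (φ' x a) x)
    (hd2 : ∀ a x, HasDerivAt (fun u => φ' u a) (φ'' x a) x)
    (hφ'bd : ∃ B, ∀ x a, |φ' x a| ≤ B)
    (hφ''bd : ∃ B, ∀ x a, |φ'' x a| ≤ B) :
    -- (i)
    (∀ ρ' : ℝ, 0 < ρ' →
      ContDiffOn ℝ 2 (fun q => IPout Δ PA φ q ρ') (Set.Icc 0 ρ') ∧
      ConcaveOn ℝ (Set.Icc 0 ρ') (fun q => IPout Δ PA φ q ρ') ∧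
      AntitoneOn (fun q => IPout Δ PA φ q ρ') (Set.Icc 0 ρ')) ∧
    -- (ii)
    (∀ ρ' : ℝ, 0 < ρ' →
      LipschitzOnWith
        (Real.toNNReal ((4 * (supNorm φ / Real.sqrt Δ) ^ 2 + 1) *
          (supNorm φ' / Real.sqrt Δ) ^ 2))
        (fun q => IPout Δ PA φ q ρ') (Set.Icc 0 ρ')) ∧
    -- (iii)
    (∀ q : ℝ, 0 ≤ q →
      LipschitzOnWith
        (Real.toNNReal ((supNorm φ' / Real.sqrt Δ) ^ 2 *
            (128 * (supNorm φ / Real.sqrt Δ) ^ 4 + 12 * (supNorm φ / Real.sqrt Δ) ^ 2 + 27)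
          + (supNorm φ'' / Real.sqrt Δ) *
            (16 * (supNorm φ / Real.sqrt Δ) ^ 3 + 4 * Real.sqrt (2 / π))))
        (fun ρ' => IPout Δ PA φ q ρ') (Set.Ici q)) := by
  have h := isBoundedLink_normalizedLink Δ hφmeas hd1 hd2 hφbd hφ'bd hφ''bd
  exact ⟨fun ρ' hρ => ⟨contDiffOn_IPout hΔ h hρ, concaveOn_IPout hΔ h ρ',
      antitoneOn_IPout hΔ h ρ'⟩,
    fun ρ' _ => lipschitzOnWith_IPout_left hΔ h ρ',
    fun q hq => lipschitzOnWith_IPout_right hΔ h hq⟩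

end GLM
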